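/- arXiv:2309.07744 — 3 statements merged into one kernel-verified Lean document; each statement's English description precedes it below -/
import Mathlib

section
/- For every integer d ≥ 2 there exist a constant c > 0 and a threshold Q such that for every prime power q ≥ Q and every real number k ≥ 1 + c·q^{−1/d}, there is a collection 𝒞 of subsets (containers) of 𝔽_q^d satisfying: (i) every general position subset of 𝔽_q^d is contained in some member of 𝒞; (ii) |C| ≤ kq for every C ∈ 𝒞; and (iii) |𝒞| ≤ 2^{c · (q/min{k−1, 1})^{d/(d+1)} · (log q)²}, where log is base 2. -/
/-- A set `P ⊆ 𝔽_q^d` is in general position if every `(d+1)`-element subset of `P`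
is affinely independent. -/
def IsGenPos (F : Type*) [Field F] (d : ℕ) (P : Set (Fin d → F)) : Prop :=
  ∀ s : Finset (Fin d → F), (↑s : Set (Fin d → F)) ⊆ P → s.card = d + 1 →
    AffineIndependent F ((↑) : s → (Fin d → F))

/-!
The container algorithm is run on homogenized points, where general position becomes linear
independence of any `d + 1` vectors. It grows a fingerprint `T` while keeping a set `C` of
candidates, each of which extends `T`. Let `A ⊆ T` have `d - 1` points. The hyperplanes through `A`
form a pencil of size `q + 1`; every point of `T \ A` occupies one of them alone, so the candidates
share the others, and by Cauchy–Schwarz at least `#C * (#C + #T - (q + d)) / (q + 1)` pairs of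
candidates are dependent together with `A`. Conversely, a conflicting pair is dependent together
with at most `(#T).choose (d - 2)` such sets `A`, since once `d - 2` points of `A` are fixed the
hyperplane they span with the pair contains at most one further point of `T`. Averaging, some
candidate conflicts with at least `(#T - (d - 2)) / ((q + 1) * (d - 1))` times the excess
`#C + #T - (q + d)`, and selecting it lowers the excess by that much. The excess thus vanishes after
about `√q * log q` selections, leaving at most `q + d` points, and there are no more containers than
fingerprints of that size.
-/

open Finset Module

section ContainerAlgorithm

variable {α : Type*} [DecidableEq α] {p : Finset α → Prop} {T C : Finset α} {y : α}

/-- A node of the container algorithm for the hereditary property `p`: the fingerprint `T` has been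
selected, and `C` is the set of candidates, each of which can individually be added to `T`. -/
structure IsBranch (p : Finset α → Prop) (T C : Finset α) : Prop where
  fingerprint : p T
  notMem : ∀ y ∈ C, y ∉ T
  extends_fingerprint : ∀ y ∈ C, p (insert y T)

open Classical in
/-- The candidates that are ruled out once the candidate `y` is added to the fingerprint `T`, i.e.
the neighbourhood of `y` in the conflict graph on the candidates. -/
noncomputable def conflicts (p : Finset α → Prop) (T C : Finset α) (y : α) : Finset α :=
  {z ∈ C | ¬ p (insert z (insert y T))}

/-- `𝒞` is a family of containers, each with at most `K` elements, for the sets with property `p`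
lying between `T` and `T ∪ C`. -/
structure IsContainerFamily (p : Finset α → Prop) (T C : Finset α) (K : ℕ)
    (𝒞 : Finset (Finset α)) : Prop where
  card_le : ∀ X ∈ 𝒞, #X ≤ K
  covers : ∀ P, p P → T ⊆ P → P ⊆ T ∪ C → ∃ X ∈ 𝒞, P ⊆ X

lemma mem_conflicts {z : α} : z ∈ conflicts p T C y ↔ z ∈ C ∧ ¬ p (insert z (insert y T)) := by
  simp only [conflicts, mem_filter]

lemma conflicts_subset : conflicts p T C y ⊆ C := fun _ hz => (mem_conflicts.1 hz).1

namespace IsBranch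

lemma discard (h : IsBranch p T C) (y : α) : IsBranch p T (C.erase y) where
  fingerprint := h.fingerprint
  notMem z hz := h.notMem z (mem_of_mem_erase hz)
  extends_fingerprint z hz := h.extends_fingerprint z (mem_of_mem_erase hz)

lemma select (h : IsBranch p T C) (hy : y ∈ C) :
    IsBranch p (insert y T) ((C \ conflicts p T C y).erase y) where
  fingerprint := h.extends_fingerprint y hy
  notMem z hz := by
    simp only [mem_erase, mem_sdiff] at hz
    simpa only [mem_insert, not_or] using ⟨hz.1, h.notMem z hz.2.1⟩
  extends_fingerprint z hz := by
    simp only [mem_erase, mem_sdiff, mem_conflicts, not_and, not_not] at hz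
    exact hz.2.2 hz.2.1

lemma self_notMem_conflicts (h : IsBranch p T C) (hy : y ∈ C) : y ∉ conflicts p T C y := fun hc =>
  (mem_conflicts.1 hc).2 (by simpa only [insert_idem] using h.extends_fingerprint y hy)

lemma card_select (h : IsBranch p T C) (hy : y ∈ C) :
    #((C \ conflicts p T C y).erase y) + #(insert y T) + #(conflicts p T C y) = #C + #T := by
  have herase := card_erase_add_one (mem_sdiff.2 ⟨hy, h.self_notMem_conflicts hy⟩)
  have hsdiff := card_sdiff_add_card_eq_card (conflicts_subset (p := p) (T := T) (C := C) (y := y))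
  have hinsert := card_insert_of_notMem (h.notMem y hy)
  omega

lemma excess_select_le (h : IsBranch p T C) (hy : y ∈ C) {K : ℕ} (hK : K ≤ #C + #T) (δ : ℕ → ℝ)
    (hyδ : δ #T * ((#C + #T : ℕ) - K) ≤ #(conflicts p T C y)) (R : ℕ) :
    ((#((C \ conflicts p T C y).erase y) + #(insert y T) : ℕ) - K) *
        Real.exp (-∑ i ∈ range R, δ (#(insert y T) + i)) ≤
      ((#C + #T : ℕ) - K) * Real.exp (-∑ i ∈ range (R + 1), δ (#T + i)) := by
  have hsum : ∑ i ∈ range (R + 1), δ (#T + i) =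
      δ #T + ∑ i ∈ range R, δ (#(insert y T) + i) := by
    simp only [sum_range_succ', card_insert_of_notMem (h.notMem y hy), add_zero, add_comm,
      add_left_comm]
  have hexcess : (0 : ℝ) ≤ (#C + #T : ℕ) - K := sub_nonneg.2 (by exact_mod_cast hK)
  rw [hsum, neg_add, Real.exp_add, ← mul_assoc]
  gcongr
  calc _ = ((#C + #T : ℕ) - K : ℝ) - #(conflicts p T C y) := by
        rw [← h.card_select hy]; push_cast; ring
    _ ≤ ((#C + #T : ℕ) - K) * (1 - δ #T) := by linarith
    _ ≤ _ := by gcongr; exact Real.one_sub_le_exp_neg _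

end IsBranch

namespace IsContainerFamily

variable {K : ℕ}

lemma singleton (h : #C + #T ≤ K) : IsContainerFamily p T C K {T ∪ C} where
  card_le X hX := by
    rw [mem_singleton.1 hX]
    exact (card_union_le T C).trans (by omega)
  covers _ _ _ hP := ⟨_, mem_singleton_self _, hP⟩

lemma union (hp : Antitone p) {𝒞₁ 𝒞₂ : Finset (Finset α)}
    (hwithout : IsContainerFamily p T (C.erase y) K 𝒞₁)
    (hwith : IsContainerFamily p (insert y T) ((C \ conflicts p T C y).erase y) K 𝒞₂) :
    IsContainerFamily p T C K (𝒞₁ ∪ 𝒞₂) where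
  card_le X hX := (mem_union.1 hX).elim (hwithout.card_le X) (hwith.card_le X)
  covers P hP hTP hPC := by
    by_cases hyP : y ∈ P
    · have hyTP : insert y T ⊆ P := insert_subset hyP hTP
      have hPC' : P ⊆ insert y T ∪ (C \ conflicts p T C y).erase y := fun z hz => by
        have hzp : p (insert z (insert y T)) := hp (insert_subset hz hyTP) hP
        have := hPC hz
        simp only [mem_union, mem_insert, mem_erase, mem_sdiff, mem_conflicts] at this ⊢
        tauto
      obtain ⟨X, hX, hPX⟩ := hwith.covers P hP hyTP hPC'
      exact ⟨X, mem_union_right _ hX, hPX⟩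
    · have hPC' : P ⊆ T ∪ C.erase y := fun z hz => by
        have hzy : z ≠ y := ne_of_mem_of_not_mem hz hyP
        have := hPC hz
        simp only [mem_union, mem_erase] at this ⊢
        tauto
      obtain ⟨X, hX, hPX⟩ := hwithout.covers P hP hTP hPC'
      exact ⟨X, mem_union_left _ hX, hPX⟩

end IsContainerFamily

theorem IsBranch.exists_isContainerFamily (hp : Antitone p) (δ : ℕ → ℝ) (K : ℕ)
    (hδ : ∀ T C, IsBranch p T C → K < #C + #T →
      ∃ y ∈ C, δ #T * ((#C + #T : ℕ) - K) ≤ #(conflicts p T C y)) :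
    ∀ (n R : ℕ) (T C : Finset α), IsBranch p T C → #C ≤ n →
      ((#C + #T : ℕ) - K) * Real.exp (-∑ i ∈ range R, δ (#T + i)) < 1 →
      ∃ 𝒞, #𝒞 ≤ (n + 1) ^ R ∧ IsContainerFamily p T C K 𝒞 := by
  intro n
  induction n with
  | zero =>
    intro R T C hTC hCn _
    have hsmall : #C + #T ≤ K := by
      by_contra! hK
      obtain ⟨y, hy, -⟩ := hδ T C hTC hK
      exact (card_pos.2 ⟨y, hy⟩).not_ge hCn
    exact ⟨_, by simp, .singleton hsmall⟩
  | succ n ih =>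
    intro R T C hTC hCn hE
    rcases le_or_gt (#C + #T) K with hK | hK
    · exact ⟨_, by simpa using Nat.one_le_pow _ _ (by omega), .singleton hK⟩
    have hexcess : (1 : ℝ) ≤ (#C + #T : ℕ) - K := by
      rw [le_sub_iff_add_le']
      exact_mod_cast hK
    obtain ⟨y, hy, hyδ⟩ := hδ T C hTC hK
    have hcard_erase := card_erase_add_one hy
    have hcard_select := hTC.card_select hy
    have hinsert := card_insert_of_notMem (hTC.notMem y hy)
    obtain _ | R := R
    · simp only [range_zero, sum_empty, neg_zero, Real.exp_zero, mul_one] at hE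
      exact absurd hexcess hE.not_ge
    obtain ⟨𝒞₁, hcard₁, hfam₁⟩ := ih (R + 1) T (C.erase y) (hTC.discard y) (by omega) <|
      hE.trans_le' (by gcongr; exact erase_subset y C)
    obtain ⟨𝒞₂, hcard₂, hfam₂⟩ := ih R _ _ (hTC.select hy) (by omega) <|
      hE.trans_le' (hTC.excess_select_le hy hK.le δ hyδ R)
    refine ⟨𝒞₁ ∪ 𝒞₂, ?_, hfam₁.union hp hfam₂⟩
    calc #(𝒞₁ ∪ 𝒞₂) ≤ (n + 1) ^ (R + 1) + (n + 1) ^ R := (card_union_le _ _).trans (by gcongr)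
      _ = (n + 1) ^ R * (n + 1 + 1) := by ring
      _ ≤ (n + 1 + 1) ^ (R + 1) := by rw [pow_succ _ R]; gcongr; omega

end ContainerAlgorithm

section LinearAlgebra

variable {F V α : Type*} [Field F] [AddCommGroup V] [Module F V] {v : α → V}

lemma card_le_card_of_mem_span_image {s t : Finset α} (hs : LinearIndepOn F v (s : Set α))
    (hst : ∀ x ∈ s, v x ∈ Submodule.span F (v '' (t : Set α))) : #s ≤ #t := by
  classical
  rw [← coe_image] at hst
  have hcard := linearIndependent_le_span' _ hs (t.image v : Set V) <| by
    rintro _ ⟨x, rfl⟩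
    exact hst x x.2
  have hcard' : #s ≤ #(t.image v) := by simpa using hcard
  exact hcard'.trans card_image_le

lemma exists_mem_span_of_not_linearIndepOn {s t : Set α} (hs : LinearIndepOn F v s)
    (hst : s ⊆ t) (ht : ¬ LinearIndepOn F v t) :
    ∃ x ∈ t \ s, v x ∈ Submodule.span F (v '' (t \ {x})) := by
  obtain ⟨b, hbt, hsb, hspan, hb⟩ := exists_linearIndepOn_extension hs hst
  obtain ⟨x, hxt, hxb⟩ := Set.not_subset.1 fun htb => ht (hb.mono htb)
  refine ⟨x, ⟨hxt, fun hxs => hxb (hsb hxs)⟩, ?_⟩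
  exact Submodule.span_mono (Set.image_mono (Set.subset_sdiff_singleton hbt hxb))
    (hspan ⟨x, hxt, rfl⟩)

open Classical in
lemma card_image_span_singleton_le [Finite F] (hV : finrank F V = 2) (S : Finset V)
    (hS : ∀ x ∈ S, x ≠ 0) : #(S.image fun x => Submodule.span F {x}) ≤ Nat.card F + 1 := by
  have : FiniteDimensional F V := .of_finrank_pos (by omega)
  have : Finite V := Module.finite_of_finite F
  have hsub : (S.image fun x => Submodule.span F {x} : Set (Submodule F V)) ⊆
      Set.range (Projectivization.submodule (K := F) (V := V)) := by
    simp only [coe_image, Set.image_subset_iff]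
    exact fun x hx => ⟨Projectivization.mk F x (hS x hx), Projectivization.submodule_mk ..⟩
  rw [← Projectivization.card_of_finrank_two F V hV, ← Set.ncard_coe_finset,
    ← Set.ncard_range_of_injective (Projectivization.submodule_injective (K := F) (V := V))]
  exact Set.ncard_le_ncard hsub (Set.toFinite _)

open Classical in
lemma card_image_sup_span_singleton_le [Finite F] (W : Submodule F V)
    (hW : finrank F (V ⧸ W) = 2) (S : Finset V) (hS : ∀ x ∈ S, x ∉ W) :
    #(S.image fun x => W ⊔ Submodule.span F {x}) ≤ Nat.card F + 1 := by
  have hcomap : ∀ x, W ⊔ Submodule.span F {x} =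
      (Submodule.span F {W.mkQ x}).comap W.mkQ := fun x => by
    rw [← Set.image_singleton, ← Submodule.map_span, Submodule.comap_map_mkQ]
  have himage : (S.image fun x => W ⊔ Submodule.span F {x}) =
      ((S.image W.mkQ).image fun x => Submodule.span F {x}).image (Submodule.comap W.mkQ) := by
    simp only [image_image, hcomap, Function.comp_def]
  rw [himage]
  refine card_image_le.trans (card_image_span_singleton_le hW _ ?_)
  simpa [Submodule.Quotient.mk_eq_zero] using hS

/-- The system of vectors `v` restricted to `S` is `n`-wise linearly independent. For vectors in a
space of dimension `n` this says that the corresponding points of projective space are in general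
position (an arc). -/
def LinearIndepUpTo (F : Type*) {V α : Type*} [Field F] [AddCommGroup V] [Module F V] (n : ℕ)
    (v : α → V) (S : Finset α) : Prop :=
  ∀ s ⊆ S, #s ≤ n → LinearIndepOn F v (s : Set α)

variable (F v) in
lemma linearIndepUpTo_antitone (n : ℕ) : Antitone (LinearIndepUpTo F n v) :=
  fun _ _ hST hT s hs => hT s (hs.trans hST)

lemma linearIndepUpTo_empty (n : ℕ) : LinearIndepUpTo F n v ∅ := fun s hs _ => by
  rw [subset_empty.1 hs, coe_empty]
  exact linearIndepOn_empty F v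

lemma linearIndepUpTo_singleton {y : α} (n : ℕ) (hy : v y ≠ 0) : LinearIndepUpTo F n v {y} :=
  fun _ hs _ => (LinearIndepOn.singleton hy).mono (by simpa using coe_subset.2 hs)

lemma sq_card_le_card_image_mul_card_filter {β : Type*} [DecidableEq β] (C : Finset α) (f : α → β) :
    #C ^ 2 ≤ #(C.image f) * #{w ∈ C ×ˢ C | f w.1 = f w.2} := by
  have hpairs : #{w ∈ C ×ˢ C | f w.1 = f w.2} = ∑ b ∈ C.image f, #{y ∈ C | f y = b} ^ 2 := by
    rw [card_eq_sum_card_fiberwise (f := fun w => f w.1) (t := C.image f)]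
    · refine sum_congr rfl fun b _ => ?_
      rw [sq, ← card_product]
      congr 1
      ext w
      simp only [mem_filter, mem_product]
      grind
    · intro w hw
      simp only [mem_coe, mem_filter, mem_product] at hw
      exact mem_image_of_mem f hw.1.1
  rw [hpairs, card_eq_sum_card_image f C]
  exact sq_sum_le_card_mul_sum_sq

/-- The subspace spanned by `v y` and the vectors indexed by `A`. If `A` indexes a basis of a
subspace of codimension two, these are the hyperplanes of the pencil through that subspace. -/
def joinSpan (F : Type*) {V α : Type*} [Field F] [AddCommGroup V] [Module F V] (v : α → V)
    (A : Finset α) (y : α) : Submodule F V :=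
  Submodule.span F (v '' insert y (A : Set α))

variable [DecidableEq α] {T C A : Finset α} {x y z : α}

lemma joinSpan_ne (hyz : y ≠ z) (hz : z ∉ A)
    (h : LinearIndepOn F v (insert y (insert z A) : Finset α)) :
    joinSpan F v A y ≠ joinSpan F v A z := by
  intro heq
  have hmem : v z ∈ joinSpan F v A y := heq ▸ Submodule.subset_span ⟨z, by simp, rfl⟩
  rw [insert_comm, coe_insert, coe_insert] at h
  exact h.notMem_span_of_insert (by simpa using ⟨hyz.symm, hz⟩) hmem

open Classical in
lemma card_image_joinSpan_le [Finite F] [FiniteDimensional F V]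
    (hV : finrank F V = #A + 2) (S : Finset α)
    (hS : ∀ y ∈ S, y ∉ A ∧ LinearIndepOn F v (insert y A : Finset α))
    (hA : LinearIndepOn F v (A : Set α)) : #(S.image (joinSpan F v A)) ≤ Nat.card F + 1 := by
  set W := Submodule.span F (v '' (A : Set α)) with hWdef
  have hW : finrank F (V ⧸ W) = 2 := by
    have hquot := W.finrank_quotient_add_finrank
    have hspan : finrank F W = #A := by
      rw [hWdef, Set.image_eq_range]
      exact (finrank_span_eq_card hA).trans (Fintype.card_coe A)
    omega
  have hjoin : joinSpan F v A = fun y => W ⊔ Submodule.span F {v y} := by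
    funext y
    rw [joinSpan, Set.image_insert_eq, Submodule.span_insert, sup_comm]
  rw [hjoin, ← Function.comp_def (fun x => W ⊔ Submodule.span F {x}) v, ← image_image]
  refine card_image_sup_span_singleton_le W hW _ ?_
  rw [forall_mem_image]
  intro y hy
  have hyA := (hS y hy).2
  rw [coe_insert] at hyA
  exact hyA.notMem_span_of_insert (hS y hy).1

lemma card_le_two_add : #(insert y (insert z A)) ≤ #A + 2 :=
  (card_insert_le _ _).trans (Nat.succ_le_succ (card_insert_le _ _))

lemma LinearIndepUpTo.joinSpan_ne {n : ℕ} {S : Finset α} (hS : LinearIndepUpTo F n v S)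
    (hA : #A + 2 ≤ n) (hyz : y ≠ z) (hz : z ∉ A) (hsub : insert y (insert z A) ⊆ S) :
    joinSpan F v A y ≠ joinSpan F v A z :=
  _root_.joinSpan_ne hyz hz (hS _ hsub (card_le_two_add.trans hA))

lemma IsBranch.card_image_joinSpan_add_card_le [Finite F] [FiniteDimensional F V] {n : ℕ}
    (hV : finrank F V = n) (hA : #A + 2 = n) (h : IsBranch (LinearIndepUpTo F n v) T C)
    (hAT : A ⊆ T) : #(C.image (joinSpan F v A)) + #T ≤ Nat.card F + 1 + #A := by
  have hindep : ∀ y ∈ C ∪ (T \ A), y ∉ A ∧ LinearIndepOn F v (insert y A : Finset α) := by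
    have hcard : ∀ y, #(insert y A) ≤ n := fun y => (card_insert_le y A).trans (by omega)
    intro y hy
    rcases mem_union.1 hy with hy | hy
    · exact ⟨fun hyA => h.notMem y hy (hAT hyA),
        h.extends_fingerprint y hy _ (insert_subset_insert y hAT) (hcard y)⟩
    · rw [mem_sdiff] at hy
      exact ⟨hy.2, h.fingerprint _ (insert_subset hy.1 hAT) (hcard y)⟩
  have hinjOn : Set.InjOn (joinSpan F v A) (T \ A : Finset α) := by
    intro x hx x' hx' heq
    simp only [mem_coe, mem_sdiff] at hx hx'
    by_contra hne
    exact h.fingerprint.joinSpan_ne hA.le hne hx'.2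
      (insert_subset hx.1 (insert_subset hx'.1 hAT)) heq
  have hdisj : Disjoint (C.image (joinSpan F v A)) ((T \ A).image (joinSpan F v A)) := by
    simp only [disjoint_left, mem_image, mem_sdiff, not_exists, not_and]
    rintro _ ⟨y, hy, rfl⟩ x hx heq
    have hyx : y ≠ x := (ne_of_mem_of_not_mem hx.1 (h.notMem y hy)).symm
    exact (h.extends_fingerprint y hy).joinSpan_ne hA.le hyx hx.2
      (insert_subset_insert y (insert_subset hx.1 hAT)) heq.symm
  have hpencil := card_image_joinSpan_le (hV.trans hA.symm) (C ∪ (T \ A)) hindep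
    (h.fingerprint A hAT (by omega))
  rw [image_union, card_union_of_disjoint hdisj, card_image_of_injOn hinjOn] at hpencil
  have hsdiff := card_sdiff_add_card_eq_card hAT
  omega

omit [DecidableEq α] in
lemma LinearIndepUpTo.card_le [Finite F] [FiniteDimensional F V] {n : ℕ} (hn : 2 ≤ n)
    (hV : finrank F V = n) (h : LinearIndepUpTo F n v T) : #T ≤ Nat.card F + n - 1 := by
  classical
  rcases le_or_gt (n - 2) #T with hT | hT
  · obtain ⟨A, hAT, hA⟩ := exists_subset_card_eq hT
    have hbranch : IsBranch (LinearIndepUpTo F n v) T ∅ := ⟨h, by simp, by simp⟩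
    have hpencil := hbranch.card_image_joinSpan_add_card_le hV (by omega) hAT
    omega
  · omega

open Classical in
/-- The pairs of candidates that become linearly dependent together with the set `A`. -/
noncomputable def dependentPairs (F : Type*) {V α : Type*} [Field F] [AddCommGroup V] [Module F V]
    [DecidableEq α] (v : α → V) (C A : Finset α) : Finset (α × α) :=
  {w ∈ C ×ˢ C | ¬ LinearIndepOn F v (insert w.1 (insert w.2 A) : Finset α)}

open Classical in
lemma IsBranch.mul_le_card_dependentPairs [Finite F] [FiniteDimensional F V] {n : ℕ}
    (hV : finrank F V = n) (hA : #A + 2 = n) (h : IsBranch (LinearIndepUpTo F n v) T C)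
    (hAT : A ⊆ T) :
    #C * (#C + #T - (Nat.card F + 1 + #A)) ≤ (Nat.card F + 1) * #(dependentPairs F v C A) := by
  have hsub : {w ∈ C ×ˢ C | joinSpan F v A w.1 = joinSpan F v A w.2} ⊆
      C.diag ∪ dependentPairs F v C A := by
    rintro ⟨y, z⟩ hw
    simp only [mem_filter, mem_product, mem_union, mem_diag, dependentPairs] at hw ⊢
    rcases eq_or_ne y z with hyz | hyz
    · exact .inl ⟨hw.1.1, hyz⟩
    · have hzA : z ∉ A := fun hzA => h.notMem z hw.1.2 (hAT hzA)
      exact .inr ⟨hw.1, fun hindep => joinSpan_ne hyz hzA hindep hw.2⟩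
  have hcauchy := sq_card_le_card_image_mul_card_filter C (joinSpan F v A)
  have hclasses := h.card_image_joinSpan_add_card_le hV hA hAT
  have hle := card_le_card hAT
  have himage := card_image_le (s := C) (f := joinSpan F v A)
  have hunion := (card_le_card hsub).trans (card_union_le _ _)
  rw [diag_card] at hunion
  generalize #(C.image (joinSpan F v A)) = κ at *
  have hκ : κ + (#C + #T - (Nat.card F + 1 + #A)) ≤ #C := by omega
  have hsq : #C * κ + #C * (#C + #T - (Nat.card F + 1 + #A)) ≤
      #C * κ + κ * #(dependentPairs F v C A) := by
    calc _ = #C * (κ + (#C + #T - (Nat.card F + 1 + #A))) := by ring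
      _ ≤ #C * #C := by gcongr
      _ ≤ κ * (#C + #(dependentPairs F v C A)) := by
        rw [← sq]
        exact hcauchy.trans (by gcongr)
      _ = _ := by ring
  refine (Nat.le_of_add_le_add_left hsq).trans ?_
  gcongr
  omega

lemma eq_of_mem_span_insert_insert {T B : Finset α} {x x' y z : α}
    (hT : LinearIndepUpTo F (#B + 3) v (insert y T)) (hy : y ∉ T) (hBT : B ⊆ T)
    (hx : x ∈ T \ B) (hx' : x' ∈ T \ B)
    (hxs : v x ∈ Submodule.span F (v '' (insert y (insert z B) : Finset α)))
    (hxs' : v x' ∈ Submodule.span F (v '' (insert y (insert z B) : Finset α))) : x = x' := by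
  by_contra hne
  rw [mem_sdiff] at hx hx'
  have hcard : #(insert y (insert x (insert x' B))) = #B + 3 := by
    rw [card_insert_of_notMem, card_insert_of_notMem, card_insert_of_notMem hx'.2]
    all_goals grind
  have hindep := hT (insert y (insert x (insert x' B))) (by grind) hcard.le
  have hle := card_le_card_of_mem_span_image (t := insert y (insert z B)) hindep <| by
    simp only [forall_mem_insert]
    refine ⟨Submodule.subset_span ⟨y, by simp, rfl⟩, hxs, hxs', fun i hi => ?_⟩
    exact Submodule.subset_span ⟨i, by simp [hi], rfl⟩
  have := card_le_two_add (y := y) (z := z) (A := B)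
  omega

open Classical in
lemma card_filter_not_linearIndepOn_le {e : ℕ} (hyz : LinearIndepOn F v {y, z}) (hy : y ∉ T)
    (hT : LinearIndepUpTo F (e + 3) v (insert y T)) :
    #{A ∈ T.powersetCard (e + 1) | ¬ LinearIndepOn F v (insert y (insert z A) : Finset α)} ≤
      (#T).choose e := by
  rw [← card_powersetCard]
  refine card_le_card_of_forall_subsingleton
    (fun A B => ∃ x ∈ T \ B, A = insert x B ∧
      v x ∈ Submodule.span F (v '' (insert y (insert z B) : Finset α))) ?_ ?_
  · intro A hA
    simp only [mem_filter, mem_powersetCard] at hA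
    obtain ⟨⟨hAT, hAcard⟩, hdep⟩ := hA
    obtain ⟨x, ⟨hx, hxyz⟩, hspan⟩ := exists_mem_span_of_not_linearIndepOn hyz
      (by grind) hdep
    have hxA : x ∈ A := by grind
    refine ⟨A.erase x, ?_, x, ?_, (insert_erase hxA).symm, ?_⟩
    · rw [mem_powersetCard, card_erase_of_mem hxA]
      exact ⟨(erase_subset x A).trans hAT, by omega⟩
    · simpa using hAT hxA
    · refine Submodule.span_mono (Set.image_mono ?_) hspan
      grind
  · rintro B hB A ⟨-, x, hx, rfl, hspan⟩ A' ⟨-, x', hx', rfl, hspan'⟩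
    obtain ⟨hBT, rfl⟩ := mem_powersetCard.1 hB
    rw [eq_of_mem_span_insert_insert hT hy hBT hx hx' hspan hspan']

lemma IsBranch.sum_card_dependentPairs_le {e : ℕ}
    (hv : ∀ y z, LinearIndepOn F v {y, z})
    (h : IsBranch (LinearIndepUpTo F (e + 3) v) T C) :
    ∑ A ∈ T.powersetCard (e + 1), #(dependentPairs F v C A) ≤
      (∑ y ∈ C, #(conflicts (LinearIndepUpTo F (e + 3) v) T C y)) * (#T).choose e := by
  classical
  have hzero : ∀ y ∈ C, ∀ z ∈ C, z ∉ conflicts (LinearIndepUpTo F (e + 3) v) T C y →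
      #{A ∈ T.powersetCard (e + 1) |
        ¬ LinearIndepOn F v (insert y (insert z A) : Finset α)} = 0 := by
    intro y _ z hz hconf
    rw [mem_conflicts, not_and, not_not] at hconf
    rw [card_eq_zero, filter_eq_empty_iff]
    intro A hA
    rw [mem_powersetCard] at hA
    rw [not_not, insert_comm]
    exact hconf hz _ (insert_subset_insert z (insert_subset_insert y hA.1))
      (card_le_two_add.trans (by omega))
  calc _ = ∑ y ∈ C, ∑ z ∈ C, #{A ∈ T.powersetCard (e + 1) |
        ¬ LinearIndepOn F v (insert y (insert z A) : Finset α)} := by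
        rw [← sum_product (f := fun w : α × α => #{A ∈ T.powersetCard (e + 1) |
          ¬ LinearIndepOn F v (insert w.1 (insert w.2 A) : Finset α)})]
        exact sum_card_bipartiteAbove_eq_sum_card_bipartiteBelow
          (r := fun A (w : α × α) => ¬ LinearIndepOn F v (insert w.1 (insert w.2 A) : Finset α))
    _ = ∑ y ∈ C, ∑ z ∈ conflicts (LinearIndepUpTo F (e + 3) v) T C y,
        #{A ∈ T.powersetCard (e + 1) |
          ¬ LinearIndepOn F v (insert y (insert z A) : Finset α)} :=
      sum_congr rfl fun y hy => (sum_subset conflicts_subset (hzero y hy)).symm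
    _ ≤ _ := by
      rw [sum_mul]
      refine sum_le_sum fun y hy => sum_le_card_nsmul _ _ _ fun z _ => ?_
      exact card_filter_not_linearIndepOn_le (hv y z) (h.notMem y hy) (h.extends_fingerprint y hy)

theorem IsBranch.exists_mul_le_card_conflicts [Finite F] [FiniteDimensional F V] {e : ℕ}
    (hV : finrank F V = e + 3) (hv : ∀ y z, LinearIndepOn F v {y, z})
    (h : IsBranch (LinearIndepUpTo F (e + 3) v) T C) (hC : C.Nonempty) :
    ∃ y ∈ C, (#T - e) * (#C + #T - (Nat.card F + e + 2)) ≤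
      (Nat.card F + 1) * (e + 1) * #(conflicts (LinearIndepUpTo F (e + 3) v) T C y) := by
  set excess := #C + #T - (Nat.card F + e + 2) with hexcess
  rcases Nat.lt_or_ge #T e with hTe | hTe
  · obtain ⟨y, hy⟩ := hC
    exact ⟨y, hy, by simp [Nat.sub_eq_zero_of_le hTe.le]⟩
  refine exists_le_of_sum_le hC ?_
  rw [sum_const, smul_eq_mul, ← mul_sum]
  refine Nat.le_of_mul_le_mul_left ?_ (Nat.choose_pos hTe)
  have hlower : (#T).choose (e + 1) * (#C * excess) ≤
      (Nat.card F + 1) * ∑ A ∈ T.powersetCard (e + 1), #(dependentPairs F v C A) := by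
    rw [← card_powersetCard, mul_sum, ← smul_eq_mul]
    refine card_nsmul_le_sum _ _ _ fun A hA => ?_
    obtain ⟨hAT, hA⟩ := mem_powersetCard.1 hA
    simpa only [hexcess, hA, add_assoc, add_comm, add_left_comm, Nat.reduceAdd] using
      h.mul_le_card_dependentPairs hV (by omega) hAT
  calc (#T).choose e * (#C * ((#T - e) * excess))
      = (e + 1) * ((#T).choose (e + 1) * (#C * excess)) := by
        rw [← mul_assoc (e + 1), mul_comm (e + 1), Nat.choose_succ_right_eq]; ring
    _ ≤ (e + 1) * ((Nat.card F + 1) * ((∑ y ∈ C,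
        #(conflicts (LinearIndepUpTo F (e + 3) v) T C y)) * (#T).choose e)) := by
        exact Nat.mul_le_mul_left _
          (hlower.trans (Nat.mul_le_mul_left _ (h.sum_card_dependentPairs_le hv)))
    _ = _ := by ring

end LinearAlgebra

section ArcContainers

variable {F V α : Type*} [Field F] [AddCommGroup V] [Module F V] {v : α → V} [Fintype α]

lemma isBranch_empty_univ [DecidableEq α] (n : ℕ) (hv : ∀ y, v y ≠ 0) :
    IsBranch (LinearIndepUpTo F n v) ∅ univ where
  fingerprint := linearIndepUpTo_empty n
  notMem y _ := notMem_empty y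
  extends_fingerprint y _ := linearIndepUpTo_singleton n (hv y)

theorem exists_isContainerFamily_linearIndepUpTo [DecidableEq α] [Finite F]
    [FiniteDimensional F V] {e : ℕ} (hV : finrank F V = e + 3)
    (hv : ∀ y z, LinearIndepOn F v {y, z}) {M : ℕ}
    (hM : Fintype.card α *
      Real.exp (-∑ i ∈ range M, ((i - e : ℕ) : ℝ) / ((Nat.card F + 1) * (e + 1))) < 1) :
    ∃ 𝒞, #𝒞 ≤ (Fintype.card α + 1) ^ M ∧
      IsContainerFamily (LinearIndepUpTo F (e + 3) v) ∅ univ (Nat.card F + e + 2) 𝒞 := by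
  have hv0 : ∀ y, v y ≠ 0 := fun y => (hv y y).ne_zero (Set.mem_insert y _)
  refine IsBranch.exists_isContainerFamily (linearIndepUpTo_antitone F v _)
    (fun t => ((t - e : ℕ) : ℝ) / ((Nat.card F + 1) * (e + 1))) _ ?_ _ M ∅ univ
    (isBranch_empty_univ _ hv0) card_univ.le ?_
  · intro T C h hlarge
    have hT := h.fingerprint.card_le (by omega) hV
    have hC : C.Nonempty := card_pos.1 (by omega)
    obtain ⟨y, hy, hconf⟩ := h.exists_mul_le_card_conflicts hV hv hC
    refine ⟨y, hy, ?_⟩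
    rw [div_mul_eq_mul_div, div_le_iff₀' (by positivity), ← Nat.cast_sub hlarge.le]
    exact_mod_cast hconf
  · rw [card_univ, card_empty, add_zero]
    simp only [zero_add]
    refine hM.trans_le' ?_
    gcongr
    exact sub_le_self _ (Nat.cast_nonneg _)

end ArcContainers

section Homogenization

/-- The embedding of affine space as the hyperplane at height one, which turns affine independence
into linear independence. -/
def homogenize (F : Type*) {E : Type*} [One F] (x : E) : F × E := (1, x)

variable {F E : Type*} [Field F] [AddCommGroup E] [Module F E]

lemma linearIndependent_homogenize {ι : Type*} {p : ι → E} (hp : AffineIndependent F p) :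
    LinearIndependent F fun i => homogenize F (p i) := by
  rw [linearIndependent_iff']
  intro s g hg
  simp only [homogenize, Prod.smul_mk, Prod.ext_iff, Prod.fst_sum, Prod.snd_sum, smul_eq_mul,
    mul_one, Prod.fst_zero, Prod.snd_zero] at hg
  exact affineIndependent_iff.1 hp s g hg.1 hg.2

lemma linearIndepOn_homogenize_pair (x y : E) : LinearIndepOn F (homogenize F) {x, y} := by
  have hx : homogenize F x ≠ 0 := fun h => one_ne_zero (congrArg Prod.fst h)
  rcases eq_or_ne x y with rfl | hxy
  · rw [Set.pair_eq_singleton]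
    exact .singleton hx
  rw [linearIndepOn_pair_iff _ hxy hx]
  intro c hc
  simp only [homogenize, Prod.smul_mk, Prod.mk.injEq, smul_eq_mul, mul_one] at hc
  exact hxy (by rw [← hc.2, hc.1, one_smul])

lemma finrank_prod_fin_fun (F : Type*) [Field F] (d : ℕ) :
    finrank F (F × (Fin d → F)) = d + 1 := by
  rw [finrank_prod, finrank_self, finrank_fin_fun, add_comm]

lemma IsGenPos.linearIndepUpTo_homogenize {d : ℕ} {P : Finset (Fin d → F)}
    (hP : IsGenPos F d P) (hcard : d + 1 ≤ #P) :
    LinearIndepUpTo F (d + 1) (homogenize F) P := by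
  intro s hsP hs
  obtain ⟨t, hst, htP, ht⟩ := exists_subsuperset_card_eq hsP hs hcard
  have hindep : LinearIndepOn F (homogenize F) (t : Set (Fin d → F)) :=
    linearIndependent_homogenize (hP t (coe_subset.2 htP) ht)
  exact hindep.mono (coe_subset.2 hst)

lemma IsContainerFamily.exists_superset_of_isGenPos [Fintype F] [DecidableEq F] {d K : ℕ}
    {𝒞 : Finset (Finset (Fin d → F))}
    (h𝒞 : IsContainerFamily (LinearIndepUpTo F (d + 1) (homogenize F)) ∅ univ K 𝒞)
    {P : Set (Fin d → F)} (hP : IsGenPos F d P) :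
    ∃ C ∈ 𝒞 ∪ univ.powersetCard d, P ⊆ ↑C := by
  lift P to Finset (Fin d → F) using P.toFinite
  simp only [coe_subset]
  rcases Nat.lt_or_ge d #P with hcard | hcard
  · obtain ⟨C, hC, hPC⟩ := h𝒞.covers P (hP.linearIndepUpTo_homogenize hcard)
      (empty_subset P) (by simp)
    exact ⟨C, mem_union_left _ hC, hPC⟩
  · have hd : d ≤ Fintype.card (Fin d → F) := by
      rw [Fintype.card_fun, Fintype.card_fin]
      exact (Nat.lt_pow_self Fintype.one_lt_card).le
    obtain ⟨C, hPC, hC⟩ := exists_superset_card_eq hcard hd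
    exact ⟨C, mem_union_right _ (mem_powersetCard.2 ⟨subset_univ C, hC⟩), hPC⟩

end Homogenization

section Estimates

variable {q d : ℕ}

lemma sum_range_tsub (e L : ℕ) :
    ∑ i ∈ range (e + (L + 1)), ((i - e : ℕ) : ℝ) = L * (L + 1) / 2 := by
  have hzero : ∑ i ∈ range e, (i - e) = 0 :=
    sum_eq_zero fun i hi => Nat.sub_eq_zero_of_le (mem_range.1 hi).le
  have hgauss := sum_range_id_mul_two (L + 1)
  rw [eq_div_iff two_ne_zero, ← Nat.cast_sum, sum_range_add, hzero]
  simp only [add_tsub_cancel_left, zero_add]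
  rw [mul_comm (L : ℝ)]
  exact_mod_cast hgauss

lemma one_le_logb_two (hq : 2 ≤ q) : 1 ≤ Real.logb 2 q := by
  rw [Real.le_logb_iff_rpow_le one_lt_two (by positivity), Real.rpow_one]
  exact_mod_cast hq

lemma log_le_logb_two (q : ℕ) : Real.log q ≤ Real.logb 2 q := by
  rw [Real.logb, le_div_iff₀ (Real.log_pos one_lt_two)]
  refine mul_le_of_le_one_right (Real.log_natCast_nonneg q) ?_
  linarith [Real.log_two_lt_d9]

lemma pow_mul_exp_neg_sum_lt_one {e L : ℕ} (hq : 2 ≤ q)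
    (hL : 2 * (e + 2) * (√q * Real.logb 2 q) ≤ L) :
    (q : ℝ) ^ (e + 2) *
      Real.exp (-∑ i ∈ range (e + (L + 1)), ((i - e : ℕ) : ℝ) / ((q + 1) * (e + 1))) < 1 := by
  have hq' : (2 : ℝ) ≤ q := by exact_mod_cast hq
  have hl := one_le_logb_two hq
  have hlog : Real.log q ≤ Real.logb 2 q ^ 2 :=
    (log_le_logb_two q).trans (le_self_pow₀ hl two_ne_zero)
  have hL0 : (0 : ℝ) < L := hL.trans_lt' (by positivity)
  rw [← sum_div, sum_range_tsub, ← Real.exp_log (by positivity : (0 : ℝ) < q ^ (e + 2)),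
    ← Real.exp_add, Real.exp_lt_one_iff, ← sub_eq_add_neg, sub_neg, lt_div_iff₀ (by positivity),
    Real.log_pow]
  calc ((e + 2 : ℕ) : ℝ) * Real.log q * ((q + 1) * (e + 1))
      ≤ (e + 2 : ℕ) * Real.logb 2 q ^ 2 * ((2 * q) * (e + 2)) := by
        gcongr
        · linarith
        · norm_num
    _ = (2 * (e + 2) * (√q * Real.logb 2 q)) ^ 2 / 2 := by
        rw [mul_pow, mul_pow, mul_pow, Real.sq_sqrt (Nat.cast_nonneg q)]
        push_cast
        ring
    _ ≤ L ^ 2 / 2 := by gcongr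
    _ < L * (L + 1) / 2 := by linarith

lemma pow_add_pow_le_pow {M : ℕ} (hq : 2 ≤ q) (hM : d ≤ M) :
    (q ^ d + 1) ^ M + (q ^ d) ^ d ≤ (q ^ (d + 1)) ^ (M + 1) := by
  have hqd : 1 ≤ q ^ d := Nat.one_le_pow _ _ (by omega)
  have hsucc : q ^ d + 1 ≤ q ^ (d + 1) := by
    rw [pow_succ]
    nlinarith
  calc _ ≤ (q ^ (d + 1)) ^ M + (q ^ (d + 1)) ^ M := by
        gcongr ?_ ^ M + ?_
        exact (Nat.pow_le_pow_left (by omega) d).trans (Nat.pow_le_pow_right (by omega) hM)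
    _ = (q ^ (d + 1)) ^ M * 2 := (mul_two _).symm
    _ ≤ (q ^ (d + 1)) ^ M * q ^ (d + 1) := by gcongr; omega
    _ = _ := (pow_succ _ M).symm

lemma pow_pow_le_two_rpow {N : ℕ} (hq : 2 ≤ q) (hN : N ≤ 4 * d * (√q * Real.logb 2 q)) :
    ((q : ℝ) ^ (d + 1)) ^ N ≤ 2 ^ (4 * d * (d + 1) * √q * Real.logb 2 q ^ 2) := by
  have hl := one_le_logb_two hq
  have hqpow : (q : ℝ) = 2 ^ Real.logb 2 q :=
    (Real.rpow_logb two_pos (by norm_num) (by positivity)).symm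
  calc ((q : ℝ) ^ (d + 1)) ^ N = 2 ^ (Real.logb 2 q * ((d + 1) * N)) := by
        rw [Real.rpow_mul two_pos.le, ← hqpow, ← pow_mul, ← Real.rpow_natCast]
        push_cast
        rfl
    _ ≤ 2 ^ (Real.logb 2 q * ((d + 1) * (4 * d * (√q * Real.logb 2 q)))) := by
        gcongr
        exact one_le_two
    _ = _ := by ring_nf

lemma exists_nat_between (hq : 2 ≤ q) (hd : 1 ≤ d) :
    ∃ L : ℕ, 0 < L ∧ 2 * d * (√q * Real.logb 2 q) ≤ L ∧
      ((L + d : ℕ) : ℝ) ≤ 4 * d * (√q * Real.logb 2 q) := by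
  have hd' : (1 : ℝ) ≤ d := by exact_mod_cast hd
  have hsl : 1 ≤ √q * Real.logb 2 q := one_le_mul_of_one_le_of_one_le
    (Real.one_le_sqrt.2 (by exact_mod_cast hq.trans' one_le_two)) (one_le_logb_two hq)
  have hceil := Nat.ceil_lt_add_one (a := 2 * d * (√q * Real.logb 2 q)) (by positivity)
  refine ⟨_, Nat.ceil_pos.2 (by positivity), Nat.le_ceil _, ?_⟩
  push_cast
  nlinarith

lemma add_le_mul_of_one_add_mul_rpow_le {c k : ℝ} (hq : 1 ≤ q) (hd : 1 ≤ d) (hc : d ≤ c)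
    (hk : 1 + c * (q : ℝ) ^ (-(1 : ℝ) / d) ≤ k) : (q + d : ℝ) ≤ k * q := by
  have hq' : (1 : ℝ) ≤ q := by exact_mod_cast hq
  have hd' : (1 : ℝ) ≤ d := by exact_mod_cast hd
  have hinv : (q : ℝ)⁻¹ ≤ (q : ℝ) ^ (-(1 : ℝ) / d) := by
    rw [← Real.rpow_neg_one]
    refine Real.rpow_le_rpow_of_exponent_le hq' ?_
    rw [neg_div, neg_le_neg_iff]
    exact div_le_one_of_le₀ hd' (by positivity)
  calc (q + d : ℝ) = (1 + d * (q : ℝ)⁻¹) * q := by field_simp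
    _ ≤ (1 + c * (q : ℝ) ^ (-(1 : ℝ) / d)) * q := by
        gcongr
        exact hc.trans' (Nat.cast_nonneg d)
    _ ≤ k * q := mul_le_mul_of_nonneg_right hk (by positivity)

lemma sqrt_le_div_min_rpow {k : ℝ} (hq : 1 ≤ q) (hd : 1 ≤ d) (hk : 1 < k) :
    √q ≤ ((q : ℝ) / min (k - 1) 1) ^ ((d : ℝ) / (d + 1)) := by
  have hq' : (1 : ℝ) ≤ q := by exact_mod_cast hq
  have hd' : (1 : ℝ) ≤ d := by exact_mod_cast hd
  have hmin : 0 < min (k - 1) 1 := lt_min (sub_pos.2 hk) one_pos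
  calc √q = (q : ℝ) ^ ((1 : ℝ) / 2) := Real.sqrt_eq_rpow _
    _ ≤ (q : ℝ) ^ ((d : ℝ) / (d + 1)) := by
        refine Real.rpow_le_rpow_of_exponent_le hq' ?_
        rw [div_le_div_iff₀ two_pos (by positivity)]
        linarith
    _ ≤ _ := by
        gcongr
        exact le_div_self (by positivity) hmin (min_le_right _ _)

end Estimates

theorem container_theorem_Fqd_general {d : ℕ} (hd : 2 ≤ d) (F : Type*) [Field F] [Fintype F] :
    ∃ 𝒞 : Finset (Finset (Fin d → F)),
      (∀ P : Set (Fin d → F), IsGenPos F d P → ∃ C ∈ 𝒞, P ⊆ ↑C) ∧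
      (∀ C ∈ 𝒞, #C ≤ Fintype.card F + d) ∧
      (#𝒞 : ℝ) ≤ 2 ^ (4 * d * (d + 1) * √(Fintype.card F) *
        Real.logb 2 (Fintype.card F) ^ 2) := by
  classical
  obtain ⟨e, rfl⟩ := Nat.exists_eq_add_of_le' hd
  set q := Fintype.card F with hqF
  have hq : 2 ≤ q := Fintype.one_lt_card
  obtain ⟨L, hL0, hL, hLd⟩ := exists_nat_between (d := e + 2) hq (by omega)
  have hcard : Fintype.card (Fin (e + 2) → F) = q ^ (e + 2) := by
    rw [Fintype.card_fun, Fintype.card_fin]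
  obtain ⟨𝒞, h𝒞card, h𝒞⟩ := exists_isContainerFamily_linearIndepUpTo (M := e + (L + 1))
    (finrank_prod_fin_fun F (e + 2)) linearIndepOn_homogenize_pair <| by
      rw [hcard, Nat.card_eq_fintype_card, ← hqF, Nat.cast_pow]
      exact pow_mul_exp_neg_sum_lt_one hq (by exact_mod_cast hL)
  rw [hcard] at h𝒞card
  rw [Nat.card_eq_fintype_card, ← hqF] at h𝒞
  refine ⟨𝒞 ∪ univ.powersetCard (e + 2), fun P hP => h𝒞.exists_superset_of_isGenPos hP, ?_, ?_⟩
  · intro C hC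
    rcases mem_union.1 hC with hC | hC
    · exact h𝒞.card_le C hC
    · exact (mem_powersetCard.1 hC).2.trans_le (Nat.le_add_left _ _)
  · have hsmall : #((univ : Finset (Fin (e + 2) → F)).powersetCard (e + 2)) ≤
        (q ^ (e + 2)) ^ (e + 2) := by
      rw [card_powersetCard, card_univ, hcard]
      exact Nat.choose_le_pow _ _
    refine (pow_pow_le_two_rpow hq hLd).trans' ?_
    norm_cast
    calc #(𝒞 ∪ univ.powersetCard (e + 2))
        ≤ (q ^ (e + 2) + 1) ^ (e + L + 1) + (q ^ (e + 2)) ^ (e + 2) :=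
          (card_union_le _ _).trans (add_le_add h𝒞card hsmall)
      _ ≤ (q ^ (e + 2 + 1)) ^ (e + L + 1 + 1) := pow_add_pow_le_pow hq (by omega)
      _ = (q ^ (e + 2 + 1)) ^ (L + (e + 2)) := by congr 1; ring

/-- The second container theorem for general position sets in `𝔽_q^d`. -/
theorem container_theorem_Fqd (d : ℕ) (hd : 2 ≤ d) :
    ∃ c : ℝ, 0 < c ∧ ∃ Q : ℕ, ∀ q : ℕ, Q ≤ q → IsPrimePow q →
      ∀ (F : Type) [Field F] [Fintype F], Fintype.card F = q →
        ∀ k : ℝ, 1 + c * (q : ℝ) ^ (-(1 : ℝ) / (d : ℝ)) ≤ k →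
          ∃ 𝒞 : Finset (Finset (Fin d → F)),
            (∀ P : Set (Fin d → F), IsGenPos F d P → ∃ C ∈ 𝒞, P ⊆ ↑C) ∧
            (∀ C ∈ 𝒞, (C.card : ℝ) ≤ k * q) ∧
            ((𝒞.card : ℝ) ≤ (2 : ℝ) ^
              (c * ((q : ℝ) / min (k - 1) 1) ^ ((d : ℝ) / ((d : ℝ) + 1)) *
                (Real.logb 2 q) ^ 2)) := by
  refine ⟨4 * d * (d + 1), by positivity, 0, ?_⟩
  rintro q - - F _ _ rfl k hk
  obtain ⟨𝒞, hcover, hsize, hcount⟩ := container_theorem_Fqd_general hd F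
  have hq : 1 ≤ Fintype.card F := Fintype.card_pos
  have hd1 : 1 ≤ d := one_le_two.trans hd
  have hk1 : 1 < k := hk.trans_lt' (lt_add_of_pos_right 1 (by positivity))
  refine ⟨𝒞, hcover, fun C hC => ?_, hcount.trans ?_⟩
  · refine le_trans ?_ (add_le_mul_of_one_add_mul_rpow_le hq hd1 ?_ hk)
    · exact_mod_cast hsize C hC
    · exact_mod_cast (by nlinarith : d ≤ 4 * d * (d + 1))
  · gcongr
    · exact one_le_two
    · exact sqrt_le_div_min_rpow hq hd1 hk1
end

section
/- There exist an absolute constant c > 0 and a threshold Q such that for every prime power q ≥ Q and every integer m with m ≥ q^{1/2}·(log q)², the number of general position subsets of 𝔽_q² of size exactly m is at most the binomial coefficient C(⌈cq⌉, m), where log is base 2. -/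
/-!
A set `A` of `m` points with no three collinear contains a subset `P` of about `√q` points, and no
two points of `A \ P` are collinear with a point of `P`: they form an independent set in the graph
of pairs of points collinear with some `p ∈ P`. Every `p` sees the plane along only `q + 1` lines,
so by Cauchy–Schwarz it is collinear with many pairs of any set `S` of more than `2(q + 1)` points,
and a line contains at most two points of `P`, so few pairs are counted twice. The graph is
therefore dense on every such `S`, and the Kleitman–Winston algorithm shows that it has few
independent sets of size `m - |P|`. The resulting overhead `q ^ O(√q log q)` is exponential in `m`,
hence absorbed into `C(⌈cq⌉, m)` by the choice of `c`.
-/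

open Finset

section Choose

theorem choose_le_choose_of_two_mul_le {n i j : ℕ} (hij : i ≤ j) (hj : 2 * j ≤ n) :
    n.choose i ≤ n.choose j := by
  induction j, hij using Nat.le_induction with
  | base => exact le_rfl
  | succ j _ ih => exact (ih (by lia)).trans (Nat.choose_le_succ_of_lt_half_left (by lia))

theorem pow_mul_choose_le_choose_mul {a : ℕ} (ha : 1 ≤ a) (n m : ℕ) :
    a ^ m * n.choose m ≤ (a * n).choose m := by
  have hdesc : a ^ m * n.descFactorial m ≤ (a * n).descFactorial m := by
    rw [Nat.descFactorial_eq_prod_range, Nat.descFactorial_eq_prod_range,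
      pow_eq_prod_const, ← prod_mul_distrib]
    refine prod_le_prod' fun i _ => ?_
    rw [Nat.mul_sub]
    exact Nat.sub_le_sub_left (Nat.le_mul_of_pos_left i ha) _
  rw [Nat.descFactorial_eq_factorial_mul_choose, Nat.descFactorial_eq_factorial_mul_choose,
    mul_left_comm] at hdesc
  exact Nat.le_of_mul_le_mul_left hdesc m.factorial_pos

theorem sum_range_choose_le_pow (n k : ℕ) : ∑ i ∈ range (k + 1), n.choose i ≤ (n + 1) ^ k := by
  rw [add_pow]
  refine sum_le_sum fun i hi => ?_
  rw [one_pow, mul_one]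
  exact (Nat.choose_le_pow n i).trans
    (Nat.le_mul_of_pos_right _ (Nat.choose_pos (mem_range_succ_iff.1 hi)))

theorem sum_range_choose_succ_mul_choose_sub (n R j k : ℕ) :
    ∑ i ∈ range (k + 2), (n + 1).choose i * R.choose (j + 1 - i) =
      ∑ i ∈ range (k + 2), n.choose i * R.choose (j + 1 - i) +
        ∑ i ∈ range (k + 1), n.choose i * R.choose (j - i) := by
  rw [sum_range_succ', sum_range_succ' (fun i => n.choose i * _)]
  simp only [Nat.choose_succ_succ', Nat.add_sub_add_right, add_mul, sum_add_distrib,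
    Nat.choose_zero_right]
  ring

theorem choose_le_sum_choose_mul_choose (n R j k : ℕ) :
    R.choose j ≤ ∑ i ∈ range (k + 1), n.choose i * R.choose (j - i) := by
  simpa using single_le_sum (f := fun i => n.choose i * R.choose (j - i))
    (fun _ _ => Nat.zero_le _) (mem_range.2 k.succ_pos)

end Choose

section KleitmanWinston

variable {V : Type*} {G : SimpleGraph V}

open Classical in
/-- The independent sets of size `j` of the graph `G` that lie inside `U`, the family counted by
the Kleitman–Winston algorithm. -/
noncomputable def indepSetsIn (G : SimpleGraph V) (U : Finset V) (j : ℕ) : Finset (Finset V) :=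
  {B ∈ U.powersetCard j | G.IsIndepSet (B : Set V)}

theorem mem_indepSetsIn {U B : Finset V} {j : ℕ} :
    B ∈ indepSetsIn G U j ↔ B ⊆ U ∧ #B = j ∧ G.IsIndepSet (B : Set V) := by
  classical
  rw [indepSetsIn, mem_filter, mem_powersetCard, and_assoc]

theorem card_indepSetsIn_le_choose (U : Finset V) (j : ℕ) :
    #(indepSetsIn G U j) ≤ (#U).choose j := by
  classical exact (card_filter_le _ _).trans (card_powersetCard j U).le

variable [DecidableRel G.Adj]

theorem indepSetsIn_succ_subset [DecidableEq V] (U : Finset V) (v : V) (j : ℕ) :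
    indepSetsIn G U (j + 1) ⊆ indepSetsIn G (U.erase v) (j + 1) ∪
      (indepSetsIn G {y ∈ U.erase v | ¬G.Adj v y} j).image (insert v) := by
  intro B hB
  obtain ⟨hBU, hBcard, hBindep⟩ := mem_indepSetsIn.1 hB
  rw [mem_union, mem_image]
  by_cases hvB : v ∈ B
  · refine .inr ⟨B.erase v, mem_indepSetsIn.2 ⟨fun y hy => ?_, ?_, ?_⟩, insert_erase hvB⟩
    · obtain ⟨hyv, hyB⟩ := mem_erase.1 hy
      exact mem_filter.2 ⟨mem_erase.2 ⟨hyv, hBU hyB⟩, hBindep hvB hyB hyv.symm⟩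
    · rw [card_erase_of_mem hvB, hBcard, Nat.add_sub_cancel]
    · exact hBindep.mono (coe_subset.2 (erase_subset v B))
  · exact .inl (mem_indepSetsIn.2 ⟨subset_erase.2 ⟨hBU, hvB⟩, hBcard, hBindep⟩)

theorem card_indepSetsIn_succ_le [DecidableEq V] (U : Finset V) (v : V) (j : ℕ) :
    #(indepSetsIn G U (j + 1)) ≤ #(indepSetsIn G (U.erase v) (j + 1)) +
      #(indepSetsIn G {y ∈ U.erase v | ¬G.Adj v y} j) :=
  (card_le_card (indepSetsIn_succ_subset U v j)).trans <|
    (card_union_le _ _).trans (Nat.add_le_add_left card_image_le _)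

theorem card_erase_filter_not_adj_le [DecidableEq V] {U : Finset V} {v : V} {β : ℝ}
    (hv : β * #U ≤ #{y ∈ U | G.Adj v y}) :
    (#{y ∈ U.erase v | ¬G.Adj v y} : ℝ) ≤ #U * Real.exp (-β) := by
  have hsplit : (#{y ∈ U | G.Adj v y} + #{y ∈ U | ¬G.Adj v y} : ℝ) = #U := by
    exact_mod_cast card_filter_add_card_filter_not (s := U) (G.Adj v)
  calc (#{y ∈ U.erase v | ¬G.Adj v y} : ℝ)
      ≤ #{y ∈ U | ¬G.Adj v y} := by gcongr; exact erase_subset v U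
    _ ≤ #U * (1 - β) := by linarith
    _ ≤ #U * Real.exp (-β) := by gcongr; exact Real.one_sub_le_exp_neg β

/-- The Kleitman–Winston argument: branch on whether an independent set contains a vertex of large
degree. Including it shrinks the set of remaining candidates by a factor `exp (-β)`, so that at most
`R` candidates are left after `k` inclusions. -/
theorem card_indepSetsIn_le {R : ℕ} {β : ℝ} {U : Finset V}
    (hdeg : ∀ S ⊆ U, R < #S → ∃ v ∈ S, β * #S ≤ #{y ∈ S | G.Adj v y}) {k : ℕ}
    (hk : #U * Real.exp (-(β * k)) ≤ R) (j : ℕ) :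
    #(indepSetsIn G U j) ≤ ∑ i ∈ range (k + 1), (#U).choose i * R.choose (j - i) := by
  classical
  induction U using Finset.strongInduction generalizing k j with
  | H U ih =>
  by_cases hsmall : (#U).choose j ≤ R.choose j
  · exact (card_indepSetsIn_le_choose U j).trans (hsmall.trans (choose_le_sum_choose_mul_choose ..))
  have hRU : R < #U := by
    by_contra! hle
    exact hsmall (Nat.choose_le_choose j hle)
  obtain ⟨v, hvU, hv⟩ := hdeg U subset_rfl hRU
  have herase : U.erase v ⊂ U := erase_ssubset hvU
  set T : Finset V := {y ∈ U.erase v | ¬G.Adj v y}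
  have hTerase : T ⊆ U.erase v := filter_subset _ _
  have hTU : T ⊂ U := hTerase.trans_ssubset herase
  obtain _ | j := j
  · simp at hsmall
  obtain _ | k := k
  · refine absurd (show (#U : ℝ) ≤ R by simpa using hk) ?_
    exact_mod_cast hRU.not_ge
  have havoid := ih (U.erase v) herase (fun S hS => hdeg S (hS.trans herase.subset)) (k := k + 1)
    (le_trans (by gcongr) hk) (j + 1)
  have hcontain := ih T hTU (fun S hS => hdeg S (hS.trans hTU.subset)) (k := k) (by
    calc #T * Real.exp (-(β * k)) ≤ #U * Real.exp (-β) * Real.exp (-(β * k)) := by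
          gcongr; exact card_erase_filter_not_adj_le hv
      _ = #U * Real.exp (-(β * (k + 1 : ℕ))) := by
          rw [mul_assoc, ← Real.exp_add]; push_cast; ring_nf
      _ ≤ R := hk) j
  calc #(indepSetsIn G U (j + 1))
      ≤ #(indepSetsIn G (U.erase v) (j + 1)) + #(indepSetsIn G T j) :=
        card_indepSetsIn_succ_le U v j
    _ ≤ ∑ i ∈ range (k + 2), (#(U.erase v)).choose i * R.choose (j + 1 - i) +
          ∑ i ∈ range (k + 1), (#(U.erase v)).choose i * R.choose (j - i) := by
        refine add_le_add havoid (hcontain.trans ?_)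
        gcongr
    _ = ∑ i ∈ range (k + 2), (#U).choose i * R.choose (j + 1 - i) := by
        rw [← sum_range_choose_succ_mul_choose_sub, card_erase_add_one hvU]

end KleitmanWinston

section Fibers

variable {α β : Type*} [DecidableEq β]

theorem sum_card_fiber_eq_sum_sq (f : α → β) (S : Finset α) :
    ∑ x ∈ S, #{y ∈ S | f x = f y} = ∑ c ∈ S.image f, #{y ∈ S | c = f y} ^ 2 := by
  rw [sum_comp (fun c => #{y ∈ S | c = f y}) f]
  refine sum_congr rfl fun c _ => ?_
  simp only [smul_eq_mul, sq, eq_comm (a := c)]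

theorem sq_card_le_card_image_mul_sum_card_fiber (f : α → β) (S : Finset α) :
    #S ^ 2 ≤ #(S.image f) * ∑ x ∈ S, #{y ∈ S | f x = f y} := by
  rw [sum_card_fiber_eq_sum_sq, card_eq_sum_card_image f S]
  simp only [eq_comm (b := f _)]
  exact sq_sum_le_card_mul_sum_sq

end Fibers

section Caps

open scoped LinearAlgebra.Projectivization

variable (F : Type*) {V : Type*} [DivisionRing F] [AddCommGroup V] [Module F V]

/-- A cap: a set of points no three of which lie on a line. In the plane this is what general
position amounts to. -/
def NoThreeCollinear (P : Set V) : Prop :=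
  ∀ ⦃a⦄, a ∈ P → ∀ ⦃b⦄, b ∈ P → ∀ ⦃c⦄, c ∈ P → a ≠ b → a ≠ c → b ≠ c → ¬Collinear F {a, b, c}

/-- The graph joining two points that are collinear with some point of `P`; a cap containing `P`
is independent in it outside `P`. -/
def collinearityGraph (P : Finset V) : SimpleGraph V where
  Adj x y := x ≠ y ∧ ∃ p ∈ P, Collinear F {p, x, y}
  symm := ⟨fun x y ⟨hxy, p, hp, h⟩ => ⟨hxy.symm, p, hp, by rwa [Set.pair_comm]⟩⟩
  loopless := ⟨fun _ h => h.1 rfl⟩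

variable {F}

theorem NoThreeCollinear.mono {P Q : Set V} (hQ : NoThreeCollinear F Q) (hPQ : P ⊆ Q) :
    NoThreeCollinear F P :=
  fun _ ha _ hb _ hc => hQ (hPQ ha) (hPQ hb) (hPQ hc)

theorem NoThreeCollinear.isIndepSet_sdiff [DecidableEq V] {A P : Finset V}
    (hA : NoThreeCollinear F (A : Set V)) (hPA : P ⊆ A) :
    (collinearityGraph F P).IsIndepSet ((A \ P : Finset V) : Set V) := by
  rintro x hx y hy hxy ⟨-, p, hp, hcol⟩
  obtain ⟨hxA, hxP⟩ := mem_sdiff.1 hx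
  obtain ⟨hyA, hyP⟩ := mem_sdiff.1 hy
  exact hA (hPA hp) hxA hyA (ne_of_mem_of_not_mem hp hxP) (ne_of_mem_of_not_mem hp hyP) hxy hcol

open Classical in
theorem NoThreeCollinear.card_filter_collinear_le_two {P : Finset V}
    (hP : NoThreeCollinear F (P : Set V)) {x y : V} (hxy : x ≠ y) :
    #{p ∈ P | Collinear F {p, x, y}} ≤ 2 := by
  by_contra! hthree
  obtain ⟨a, ha, b, hb, c, hc, hab, hac, hbc⟩ := two_lt_card.1 hthree
  rw [mem_filter] at ha hb hc
  have hline {p : V} (hp : Collinear F {p, x, y}) : p ∈ line[F, x, y] :=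
    hp.mem_affineSpan_of_mem_of_ne (by simp) (by simp) (by simp) hxy
  exact hP ha.1 hb.1 hc.1 hab hac hbc
    (collinear_triple_of_mem_affineSpan_pair (hline ha.2) (hline hb.2) (hline hc.2))

open Classical in
theorem NoThreeCollinear.sum_card_collinear_le {P : Finset V}
    (hP : NoThreeCollinear F (P : Set V)) (S : Finset V) (x : V) :
    ∑ p ∈ P, #{y ∈ S | x ≠ y ∧ Collinear F {p, x, y}} ≤
      2 * #{y ∈ S | (collinearityGraph F P).Adj x y} := by
  set neighbours : Finset V := {y ∈ S | (collinearityGraph F P).Adj x y}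
  have hsub : ∀ p ∈ P, #{y ∈ S | x ≠ y ∧ Collinear F {p, x, y}} ≤
      #{y ∈ neighbours | Collinear F {p, x, y}} := by
    intro p hp
    refine card_le_card fun y hy => ?_
    obtain ⟨hyS, hxy, hcol⟩ := mem_filter.1 hy
    exact mem_filter.2 ⟨mem_filter.2 ⟨hyS, hxy, p, hp, hcol⟩, hcol⟩
  calc ∑ p ∈ P, #{y ∈ S | x ≠ y ∧ Collinear F {p, x, y}}
      ≤ ∑ p ∈ P, #{y ∈ neighbours | Collinear F {p, x, y}} := sum_le_sum hsub
    _ = ∑ y ∈ neighbours, #{p ∈ P | Collinear F {p, x, y}} :=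
        sum_card_bipartiteAbove_eq_sum_card_bipartiteBelow fun p y => Collinear F {p, x, y}
    _ ≤ #neighbours * 2 := sum_le_card_nsmul _ _ _ fun y hy =>
        hP.card_filter_collinear_le_two (mem_filter.1 hy).2.1
    _ = 2 * #neighbours := mul_comm _ _

theorem collinear_of_span_sub_eq {p x y : V} (h : F ∙ (x - p) = F ∙ (y - p)) :
    Collinear F {p, x, y} := by
  obtain ⟨r, hr⟩ := Submodule.mem_span_singleton.1 (h ▸ Submodule.mem_span_singleton_self (x - p))
  refine (collinear_iff_of_mem (Set.mem_insert p _)).2 ⟨y - p, ?_⟩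
  rintro z (rfl | rfl | rfl)
  · exact ⟨0, by simp⟩
  · exact ⟨r, by simp [hr]⟩
  · exact ⟨1, by simp⟩

variable [Finite V]

open Classical in
theorem card_image_span_sub_le {S : Finset V} {p : V} (hp : p ∉ S) :
    #(S.image fun x => F ∙ (x - p)) ≤ Nat.card (ℙ F V) := by
  have := Fintype.ofFinite (ℙ F V)
  calc #(S.image fun x => F ∙ (x - p))
      ≤ #((univ : Finset (ℙ F V)).image Projectivization.submodule) := by
        refine card_le_card (image_subset_iff.2 fun x hx => mem_image.2 ?_)
        have hxp : x - p ≠ 0 := sub_ne_zero.2 (ne_of_mem_of_not_mem hx hp)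
        exact ⟨.mk F (x - p) hxp, mem_univ _, Projectivization.submodule_mk _ hxp⟩
    _ ≤ #(univ : Finset (ℙ F V)) := card_image_le
    _ = Nat.card (ℙ F V) := by rw [card_univ, Nat.card_eq_fintype_card]

theorem NoThreeCollinear.card_le {P : Finset V} (hP : NoThreeCollinear F (P : Set V)) :
    #P ≤ Nat.card (ℙ F V) + 1 := by
  classical
  obtain rfl | ⟨p, hp⟩ := P.eq_empty_or_nonempty
  · simp
  have hinj : Set.InjOn (fun x => F ∙ (x - p)) (P.erase p : Set V) := by
    intro x hx y hy hxy
    obtain ⟨hxp, hxP⟩ := mem_erase.1 hx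
    obtain ⟨hyp, hyP⟩ := mem_erase.1 hy
    by_contra hne
    exact hP hp hxP hyP hxp.symm hyp.symm hne (collinear_of_span_sub_eq hxy)
  calc #P = #(P.erase p) + 1 := (card_erase_add_one hp).symm
    _ = #((P.erase p).image fun x => F ∙ (x - p)) + 1 := by rw [card_image_of_injOn hinj]
    _ ≤ Nat.card (ℙ F V) + 1 := by gcongr; exact card_image_span_sub_le (notMem_erase p P)

open Classical in
theorem sq_card_le_mul_sum_card_collinear {S : Finset V} {p : V} (hp : p ∉ S)
    (hS : 2 * Nat.card (ℙ F V) ≤ #S) :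
    #S ^ 2 ≤ 2 * Nat.card (ℙ F V) * ∑ x ∈ S, #{y ∈ S | x ≠ y ∧ Collinear F {p, x, y}} := by
  have hfiber : ∀ x ∈ S, #{y ∈ S | F ∙ (x - p) = F ∙ (y - p)} ≤
      #{y ∈ S | x ≠ y ∧ Collinear F {p, x, y}} + 1 := by
    intro x hx
    have hself : x ∈ {y ∈ S | F ∙ (x - p) = F ∙ (y - p)} := mem_filter.2 ⟨hx, rfl⟩
    rw [← card_erase_add_one hself]
    gcongr
    intro y hy
    obtain ⟨hyx, hy⟩ := mem_erase.1 hy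
    obtain ⟨hyS, hxy⟩ := mem_filter.1 hy
    exact mem_filter.2 ⟨hyS, hyx.symm, collinear_of_span_sub_eq hxy⟩
  have hcs : #S ^ 2 ≤ Nat.card (ℙ F V) *
      (∑ x ∈ S, #{y ∈ S | x ≠ y ∧ Collinear F {p, x, y}} + #S) := by
    calc #S ^ 2 ≤ _ := sq_card_le_card_image_mul_sum_card_fiber (fun x => F ∙ (x - p)) S
      _ ≤ _ := Nat.mul_le_mul (card_image_span_sub_le hp) (sum_le_sum hfiber)
      _ = _ := by rw [sum_add_distrib, sum_const, smul_eq_mul, mul_one]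
  nlinarith

open Classical in
theorem NoThreeCollinear.card_mul_sq_card_le {P S : Finset V}
    (hP : NoThreeCollinear F (P : Set V)) (hPS : Disjoint P S)
    (hS : 2 * Nat.card (ℙ F V) ≤ #S) :
    #P * #S ^ 2 ≤ 4 * Nat.card (ℙ F V) * ∑ x ∈ S, #{y ∈ S | (collinearityGraph F P).Adj x y} := by
  set N := Nat.card (ℙ F V)
  calc #P * #S ^ 2
      = ∑ _p ∈ P, #S ^ 2 := by rw [sum_const, smul_eq_mul]
    _ ≤ ∑ p ∈ P, 2 * N * ∑ x ∈ S, #{y ∈ S | x ≠ y ∧ Collinear F {p, x, y}} :=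
        sum_le_sum fun _ hp =>
          sq_card_le_mul_sum_card_collinear (disjoint_left.1 hPS hp) hS
    _ = 2 * N * ∑ x ∈ S, ∑ p ∈ P, #{y ∈ S | x ≠ y ∧ Collinear F {p, x, y}} := by
        rw [← mul_sum, sum_comm]
    _ ≤ 2 * N * ∑ x ∈ S, 2 * #{y ∈ S | (collinearityGraph F P).Adj x y} := by
        gcongr with x
        exact hP.sum_card_collinear_le S x
    _ = _ := by rw [← mul_sum]; ring

open Classical in
theorem NoThreeCollinear.exists_le_card_adj {P S : Finset V}
    (hP : NoThreeCollinear F (P : Set V)) (hPS : Disjoint P S)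
    (hS : 2 * Nat.card (ℙ F V) < #S) :
    ∃ x ∈ S, (#P / (4 * Nat.card (ℙ F V)) : ℝ) * #S ≤
      #{y ∈ S | (collinearityGraph F P).Adj x y} := by
  refine exists_le_of_sum_le (card_pos.1 (Nat.zero_lt_of_lt hS)) ?_
  have hpairs : (#P * #S ^ 2 : ℝ) ≤ 4 * Nat.card (ℙ F V) *
      ∑ x ∈ S, (#{y ∈ S | (collinearityGraph F P).Adj x y} : ℝ) := by
    exact_mod_cast hP.card_mul_sq_card_le hPS hS.le
  calc ∑ _x ∈ S, (#P / (4 * Nat.card (ℙ F V)) : ℝ) * #S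
      = #P * #S ^ 2 / (4 * Nat.card (ℙ F V)) := by rw [sum_const, nsmul_eq_mul]; ring
    _ ≤ _ := div_le_of_le_mul₀ (by positivity) (by positivity) (by linarith)

end Caps

theorem IsGenPos.noThreeCollinear {F : Type*} [Field F] {P : Set (Fin 2 → F)}
    (hP : IsGenPos F 2 P) : NoThreeCollinear F P := by
  classical
  intro a ha b hb c hc hab hac hbc
  have hcard : #({a, b, c} : Finset (Fin 2 → F)) = 3 :=
    card_eq_three.2 ⟨a, b, c, hab, hac, hbc, rfl⟩
  have hindep := hP {a, b, c} (by simp [Set.insert_subset_iff, ha, hb, hc]) hcard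
  have htriple := affineIndependent_iff_not_collinear.1
    (hindep.comp_embedding (Finset.equivFinOfCardEq hcard).symm.toEmbedding)
  rwa [Equiv.coe_toEmbedding, EquivLike.range_comp, Subtype.range_coe, coe_insert, coe_insert,
    coe_singleton] at htriple

section Counting

open scoped LinearAlgebra.Projectivization

variable {F V : Type*} [DivisionRing F] [AddCommGroup V] [Module F V] [Fintype V]

theorem NoThreeCollinear.card_indepSetsIn_compl_le [DecidableEq V] {P : Finset V}
    (hP : NoThreeCollinear F (P : Set V)) {k : ℕ}
    (hk : Fintype.card V * Real.exp (-(#P / (4 * Nat.card (ℙ F V)) * k)) ≤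
      2 * Nat.card (ℙ F V)) (j : ℕ) :
    #(indepSetsIn (collinearityGraph F P) Pᶜ j) ≤ ∑ i ∈ range (k + 1),
      (Fintype.card V).choose i * (2 * Nat.card (ℙ F V)).choose (j - i) := by
  classical
  have hcompl : #Pᶜ ≤ Fintype.card V := card_le_univ _
  have hshrink : #Pᶜ * Real.exp (-(#P / (4 * Nat.card (ℙ F V)) * k)) ≤
      (2 * Nat.card (ℙ F V) : ℕ) := by
    push_cast
    exact le_trans (by gcongr) hk
  refine (card_indepSetsIn_le (fun S hS hNS => ?_) hshrink j).trans (by gcongr)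
  exact hP.exists_le_card_adj (disjoint_compl_right.mono_right hS) hNS

theorem ncard_noThreeCollinear_le {m t k : ℕ} (htm : t ≤ m)
    (hk : Fintype.card V * Real.exp (-(t / (4 * Nat.card (ℙ F V)) * k)) ≤
      2 * Nat.card (ℙ F V)) :
    {A : Finset V | #A = m ∧ NoThreeCollinear F (A : Set V)}.ncard ≤
      (Fintype.card V).choose t * ∑ i ∈ range (k + 1),
        (Fintype.card V).choose i * (2 * Nat.card (ℙ F V)).choose (m - t - i) := by
  classical
  set caps : Finset (Finset V) := {P ∈ univ.powersetCard t | NoThreeCollinear F (P : Set V)}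
  let completions (P : Finset V) : Finset (Finset V) :=
    indepSetsIn (collinearityGraph F P) Pᶜ (m - t)
  have hcompletions : ∀ P ∈ caps, #(completions P) ≤ ∑ i ∈ range (k + 1),
      (Fintype.card V).choose i * (2 * Nat.card (ℙ F V)).choose (m - t - i) := by
    intro P hP
    obtain ⟨hPt, hcap⟩ := mem_filter.1 hP
    have hPcard : #P = t := (mem_powersetCard.1 hPt).2
    exact hcap.card_indepSetsIn_compl_le (by rwa [hPcard]) _
  have hcover : {A : Finset V | #A = m ∧ NoThreeCollinear F (A : Set V)} ⊆
      (caps.biUnion fun P => (completions P).image (P ∪ ·) : Finset (Finset V)) := by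
    rintro A ⟨hAcard, hA⟩
    obtain ⟨P, hPA, hPcard⟩ := exists_subset_card_eq (htm.trans_eq hAcard.symm)
    refine mem_coe.2 (mem_biUnion.2 ⟨P, ?_, mem_image.2 ⟨A \ P, ?_, union_sdiff_of_subset hPA⟩⟩)
    · exact mem_filter.2 ⟨mem_powersetCard.2 ⟨subset_univ P, hPcard⟩, hA.mono (coe_subset.2 hPA)⟩
    · refine mem_indepSetsIn.2 ⟨?_, ?_, hA.isIndepSet_sdiff hPA⟩
      · exact fun x hx => mem_compl.2 (mem_sdiff.1 hx).2
      · rw [card_sdiff_of_subset hPA, hAcard, hPcard]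
  calc {A : Finset V | #A = m ∧ NoThreeCollinear F (A : Set V)}.ncard
      ≤ #(caps.biUnion fun P => (completions P).image (P ∪ ·)) :=
        (Set.ncard_le_ncard hcover).trans (Set.ncard_coe_finset _).le
    _ ≤ #caps * _ :=
        card_biUnion_le_card_mul _ _ _ fun P hP => card_image_le.trans (hcompletions P hP)
    _ ≤ (Fintype.card V).choose t * _ := by
        gcongr
        exact (card_filter_le _ _).trans (card_powersetCard t univ).le

end Counting

section Estimates

theorem sq_mul_exp_neg_le {q t k : ℝ} (hq : 1 ≤ q) (ht : √q ≤ t)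
    (hk : 8 * √q * Real.log q ≤ k) : q ^ 2 * Real.exp (-(t / (4 * (q + 1)) * k)) ≤ q := by
  have hlog : 0 ≤ Real.log q := Real.log_nonneg hq
  have ht₀ : 0 ≤ t := q.sqrt_nonneg.trans ht
  have hexponent : Real.log q ≤ t / (4 * (q + 1)) * k := by
    rw [div_mul_eq_mul_div, le_div_iff₀ (by positivity)]
    calc Real.log q * (4 * (q + 1)) ≤ Real.log q * (8 * q) :=
          mul_le_mul_of_nonneg_left (by linarith) hlog
      _ = √q * (8 * √q * Real.log q) := by
          linear_combination (-8 * Real.log q) * Real.mul_self_sqrt (zero_le_one.trans hq)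
      _ ≤ t * k := by gcongr
  calc q ^ 2 * Real.exp (-(t / (4 * (q + 1)) * k)) ≤ q ^ 2 * Real.exp (-Real.log q) := by gcongr
    _ = q := by rw [Real.exp_neg, Real.exp_log (by linarith)]; field_simp

theorem pow_le_two_pow_of_mul_logb_le {a n m : ℕ} (ha : 0 < a) (h : n * Real.logb 2 a ≤ m) :
    a ^ n ≤ 2 ^ m := by
  have hreal : (a : ℝ) ^ n ≤ 2 ^ (m : ℝ) := by
    rw [← Real.logb_le_iff_le_rpow one_lt_two (by positivity), Real.logb_pow]
    exact h
  exact_mod_cast hreal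

theorem exists_sq_mul_exp_neg_le_and_pow_le {q m : ℕ} (hq : 2 ≤ q)
    (hm : √q * Real.logb 2 q ^ 2 ≤ m) :
    ∃ t k : ℕ, t ≤ m ∧ (q : ℝ) ^ 2 * Real.exp (-(t / (4 * (q + 1)) * k)) ≤ q ∧
      (q ^ 2 + 1) ^ (t + k) ≤ (2 ^ 33) ^ m := by
  have hq₂ : (2 : ℝ) ≤ q := by exact_mod_cast hq
  set s := √(q : ℝ)
  set L := Real.logb 2 q
  have hs : 1 ≤ s := Real.one_le_sqrt.2 (by linarith)
  have hL : 1 ≤ L := by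
    rw [Real.le_logb_iff_rpow_le one_lt_two (by positivity), Real.rpow_one]
    exact hq₂
  have hlog : Real.log q ≤ L :=
    le_div_self (Real.log_nonneg (by linarith)) (Real.log_pos one_lt_two)
      (Real.log_two_lt_d9.le.trans (by norm_num))
  have hsL : s ≤ s * L := le_mul_of_one_le_right (by positivity) hL
  refine ⟨⌈s⌉₊, ⌈8 * s * L⌉₊, ?_, ?_, ?_⟩
  · exact Nat.ceil_le.2 ((le_mul_of_one_le_right (by positivity) (one_le_pow₀ hL)).trans hm)
  · refine sq_mul_exp_neg_le (by linarith) (Nat.le_ceil s) (le_trans ?_ (Nat.le_ceil _))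
    gcongr
  · have hsum : (⌈s⌉₊ + ⌈8 * s * L⌉₊ : ℝ) ≤ 11 * (s * L) := by
      have hs_ceil := Nat.ceil_lt_add_one (show 0 ≤ s by positivity)
      have hsL_ceil := Nat.ceil_lt_add_one (show 0 ≤ 8 * s * L by positivity)
      linarith
    have hcube : q ^ 2 + 1 ≤ q ^ 3 := by nlinarith [sq_nonneg q]
    rw [← pow_mul]
    refine (Nat.pow_le_pow_left hcube _).trans ?_
    rw [← pow_mul]
    refine pow_le_two_pow_of_mul_logb_le (by lia) ?_
    push_cast
    calc (3 * (⌈s⌉₊ + ⌈8 * s * L⌉₊) : ℝ) * L ≤ 3 * (11 * (s * L)) * L := by gcongr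
      _ = 33 * (s * L ^ 2) := by ring
      _ ≤ 33 * m := by gcongr

end Estimates

section Plane

open scoped LinearAlgebra.Projectivization

variable {F V : Type*} [Field F] [Fintype F] [AddCommGroup V] [Module F V]

theorem ncard_noThreeCollinear_le_pow_mul_choose [Finite V] (hV : Module.finrank F V = 2)
    {m t k : ℕ} (htm : t ≤ m) (hm : m ≤ 2 * Fintype.card F)
    (hk : (Fintype.card F : ℝ) ^ 2 *
      Real.exp (-(t / (4 * (Fintype.card F + 1)) * k)) ≤ Fintype.card F) :
    {A : Finset V | #A = m ∧ NoThreeCollinear F (A : Set V)}.ncard ≤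
      (Fintype.card F ^ 2 + 1) ^ (t + k) * (4 * Fintype.card F).choose m := by
  have := Fintype.ofFinite V
  set q := Fintype.card F
  have hq₁ : 0 < q := Fintype.card_pos
  have hcardV : Fintype.card V = q ^ 2 := by rw [Module.card_eq_pow_finrank (K := F), hV]
  have hlines : Nat.card (ℙ F V) = q + 1 := by
    rw [Projectivization.card_of_finrank_two F V hV, Nat.card_eq_fintype_card]
  refine (ncard_noThreeCollinear_le (F := F) htm (k := k) ?_).trans ?_
  · rw [hcardV, hlines]
    push_cast
    linarith
  rw [hcardV, hlines]
  calc (q ^ 2).choose t * ∑ i ∈ range (k + 1), (q ^ 2).choose i * (2 * (q + 1)).choose (m - t - i)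
      ≤ (q ^ 2 + 1) ^ t * ∑ i ∈ range (k + 1), (q ^ 2).choose i * (4 * q).choose m := by
        gcongr with i
        · exact (Nat.choose_le_pow _ t).trans (Nat.pow_le_pow_left (Nat.le_succ _) t)
        · exact (Nat.choose_le_choose _ (by lia)).trans
            (choose_le_choose_of_two_mul_le (by lia) (by lia))
    _ ≤ (q ^ 2 + 1) ^ t * ((q ^ 2 + 1) ^ k * (4 * q).choose m) := by
        rw [← sum_mul]
        gcongr
        exact sum_range_choose_le_pow _ k
    _ = (q ^ 2 + 1) ^ (t + k) * (4 * q).choose m := by ring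

theorem counting_general_position_sets_fixed_size_Fq2_general (hV : Module.finrank F V = 2)
    {m : ℕ} (hm : √(Fintype.card F) * Real.logb 2 (Fintype.card F) ^ 2 ≤ m) :
    {A : Finset V | #A = m ∧ NoThreeCollinear F (A : Set V)}.ncard ≤
      (2 ^ 35 * Fintype.card F).choose m := by
  have hq : 1 < Fintype.card F := Fintype.one_lt_card
  have := Module.finite_of_finrank_eq_succ hV
  have := Module.finite_of_finite F (M := V)
  by_cases hsmall : m ≤ Fintype.card F + 2
  · obtain ⟨t, k, htm, hk, hoverhead⟩ := exists_sq_mul_exp_neg_le_and_pow_le hq hm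
    calc {A : Finset V | #A = m ∧ NoThreeCollinear F (A : Set V)}.ncard
        ≤ (Fintype.card F ^ 2 + 1) ^ (t + k) * (4 * Fintype.card F).choose m :=
          ncard_noThreeCollinear_le_pow_mul_choose hV htm (by lia) hk
      _ ≤ (2 ^ 33) ^ m * (4 * Fintype.card F).choose m := by gcongr
      _ ≤ (2 ^ 33 * (4 * Fintype.card F)).choose m := pow_mul_choose_le_choose_mul (by simp) _ m
      _ = _ := by rw [← mul_assoc]; norm_num
  · have hempty : {A : Finset V | #A = m ∧ NoThreeCollinear F (A : Set V)} = ∅ := by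
      refine Set.eq_empty_of_forall_notMem fun A ⟨hAcard, hA⟩ => hsmall ?_
      rw [← hAcard, ← Nat.card_eq_fintype_card]
      exact hA.card_le.trans_eq (by rw [Projectivization.card_of_finrank_two F V hV])
    rw [hempty, Set.ncard_empty]
    exact Nat.zero_le _

end Plane

/-- There is an absolute constant `c > 0` such that for all
sufficiently large prime powers `q` and every `m ≥ q^{1/2}(log q)²`, the number of
general position sets of size `m` in `𝔽_q²` is at most `C(⌈cq⌉, m)`. -/
theorem counting_general_position_sets_fixed_size_Fq2 :
    ∃ c : ℝ, 0 < c ∧ ∃ Q : ℕ, ∀ q : ℕ, Q ≤ q → IsPrimePow q →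
      ∀ (F : Type) [Field F] [Fintype F], Fintype.card F = q →
        ∀ m : ℕ, (q : ℝ) ^ ((1 : ℝ) / 2) * (Real.logb 2 q) ^ 2 ≤ (m : ℝ) →
          ({P : Finset (Fin 2 → F) | P.card = m ∧ IsGenPos F 2 ↑P}).ncard ≤
            Nat.choose ⌈c * (q : ℝ)⌉₊ m := by
  refine ⟨2 ^ 35, by norm_num, 0, ?_⟩
  rintro _ - - F _ _ rfl m hm
  rw [← Real.sqrt_eq_rpow] at hm
  have hceil : ⌈(2 ^ 35 : ℝ) * Fintype.card F⌉₊ = 2 ^ 35 * Fintype.card F := by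
    exact_mod_cast Nat.ceil_natCast (R := ℝ) (2 ^ 35 * Fintype.card F)
  rw [hceil]
  refine (Set.ncard_le_ncard ?_).trans
    (counting_general_position_sets_fixed_size_Fq2_general (V := Fin 2 → F) (by simp) hm)
  exact fun P hP => ⟨hP.1, hP.2.noThreeCollinear⟩
end

section
/- For every integer d ≥ 2 there exists a constant c > 0 such that for every prime power q and every point set P ⊆ 𝔽_q^d with |P| ≥ 4d·q^{d−1}, the number of (d+1)-element subsets of P that are critical coplanar is at least c·|P|^{d+1}/q. -/
/-- A `(d+1)`-element subset of `𝔽_q^d` is critical coplanar if it is affinely dependent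
(coplanar) while every proper subset of it is affinely independent. -/
def IsCriticalCoplanar (F : Type*) [Field F] (d : ℕ) (t : Finset (Fin d → F)) : Prop :=
  t.card = d + 1 ∧ ¬ AffineIndependent F ((↑) : t → (Fin d → F)) ∧
    ∀ s : Finset (Fin d → F), s ⊂ t → AffineIndependent F ((↑) : s → (Fin d → F))

/-!
In the given point set `A`, fix an affinely independent `S` with `d - 1` points. Every point off
`span S` lies on exactly one of the at most `q + 1` hyperplanes through `span S`, so by
Cauchy–Schwarz many pairs `(x, y)` of points of `A` off `span S` share such a hyperplane. Then
`S ∪ {x, y}` is affinely dependent, and it is a circuit unless `y` falls on one of the `d` flats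
spanned by `d - 1` points of `S ∪ {x}`, which have `q ^ (d - 2)` points each. The lower bound on
`#A` makes these exceptions negligible, leaving on the order of `#A ^ 2 / q` circuits above each
`S`; the same bound provides on the order of `#A ^ (d - 1)` choices of `S`, as a small flat never
contains more than half of `A`.
-/

section

open AffineSubspace Finset Module
open scoped LinearAlgebra.Projectivization Nat

section Counting

variable {α β : Type*}

theorem sq_card_le_card_mul_sum_card_fiber [DecidableEq β] {f : α → β} {s : Finset α} {t : Finset β}
    (hf : ∀ a ∈ s, f a ∈ t) : #s ^ 2 ≤ #t * ∑ a ∈ s, #{b ∈ s | f b = f a} :=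
  calc #s ^ 2 = (∑ c ∈ t, #{a ∈ s | f a = c}) ^ 2 := by rw [← card_eq_sum_card_fiberwise hf]
    _ ≤ #t * ∑ c ∈ t, #{a ∈ s | f a = c} ^ 2 := sq_sum_le_card_mul_sum_sq
    _ = #t * ∑ c ∈ t, ∑ a ∈ s with f a = c, #{b ∈ s | f b = f a} := by
      congr! 2 with c
      rw [sq, ← smul_eq_mul, ← sum_const]
      exact sum_congr rfl fun a ha ↦ by rw [(mem_filter.1 ha).2]
    _ = #t * ∑ a ∈ s, #{b ∈ s | f b = f a} := by rw [sum_fiberwise_of_maps_to hf]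

theorem sum_card_filter_superset_le [DecidableEq α] {𝒮 𝒯 : Finset (Finset α)} {m n : ℕ}
    (h𝒮 : (𝒮 : Set (Finset α)).Sized m) (h𝒯 : (𝒯 : Set (Finset α)).Sized n) :
    ∑ s ∈ 𝒮, #{t ∈ 𝒯 | s ⊆ t} ≤ #𝒯 * n.choose m :=
  calc ∑ s ∈ 𝒮, #{t ∈ 𝒯 | s ⊆ t} = ∑ t ∈ 𝒯, #{s ∈ 𝒮 | s ⊆ t} := by
        simpa only [bipartiteAbove, bipartiteBelow] using
          sum_card_bipartiteAbove_eq_sum_card_bipartiteBelow (s := 𝒮) (t := 𝒯) (· ⊆ ·)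
    _ ≤ ∑ t ∈ 𝒯, #(t.powersetCard m) :=
        sum_le_sum fun t _ ↦ card_le_card fun s hs ↦
          mem_powersetCard.2 ⟨(mem_filter.1 hs).2, h𝒮 (mem_filter.1 hs).1⟩
    _ = #𝒯 * n.choose m :=
        sum_const_nat fun t ht ↦ by rw [card_powersetCard, h𝒯 ht]

end Counting

variable {k V P : Type*} [DivisionRing k] [AddCommGroup V] [Module k V] [AddTorsor V P]

section Independence

theorem affineIndependent_of_finset_subset {s t : Finset P} (hst : s ⊆ t)
    (ht : AffineIndependent k ((↑) : t → P)) : AffineIndependent k ((↑) : s → P) :=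
  AffineIndependent.mono (s := (s : Set P)) (t := (t : Set P)) ht (coe_subset.2 hst)

theorem affineIndependent_finset_insert [DecidableEq P] {s : Finset P} {x : P}
    (hs : AffineIndependent k ((↑) : s → P)) (hx : x ∉ affineSpan k (s : Set P)) :
    AffineIndependent k ((↑) : ↥(insert x s) → P) := by
  have mem_of_ne (y : ↥(insert x s)) (hy : y ≠ ⟨x, mem_insert_self x s⟩) : (y : P) ∈ s :=
    (mem_insert.1 y.2).resolve_left fun h ↦ hy (Subtype.ext h)
  refine AffineIndependent.affineIndependent_of_notMem_span
    (i := ⟨x, mem_insert_self x s⟩) ?_ fun h ↦ hx (affineSpan_mono k ?_ h)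
  · let e : {y : ↥(insert x s) // y ≠ ⟨x, mem_insert_self x s⟩} ↪ s :=
      ⟨fun y ↦ ⟨y.1, mem_of_ne y.1 y.2⟩,
        fun a b h ↦ Subtype.ext (Subtype.ext (congrArg (fun z : s ↦ (z : P)) h))⟩
    exact hs.comp_embedding e
  · rintro _ ⟨y, hy, rfl⟩
    exact mem_of_ne y hy

theorem notMem_affineSpan_of_affineIndependent_insert [DecidableEq P] {s : Finset P} {x : P}
    (hx : x ∉ s) (hs : AffineIndependent k ((↑) : ↥(insert x s) → P)) :
    x ∉ affineSpan k (s : Set P) := by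
  refine fun h ↦ hs.notMem_affineSpan_sdiff ⟨x, mem_insert_self x s⟩ Set.univ
    (affineSpan_mono k (fun z hz ↦ ?_) h)
  exact ⟨⟨z, mem_insert_of_mem hz⟩,
    ⟨trivial, fun h ↦ ne_of_mem_of_not_mem hz hx (congrArg Subtype.val h)⟩, rfl⟩

theorem finrank_quotient_direction_affineSpan_add_card [FiniteDimensional k V]
    {s : Finset P} (hsn : s.Nonempty) (hs : AffineIndependent k ((↑) : s → P)) :
    finrank k (V ⧸ (affineSpan k (s : Set P)).direction) + #s = finrank k V + 1 := by
  have : Nonempty s := hsn.to_subtype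
  have h : finrank k (vectorSpan k (s : Set P)) + 1 = #s := by
    convert hs.finrank_vectorSpan_add_one <;> simp
  rw [direction_affineSpan, ← h, ← add_assoc, Submodule.finrank_quotient_add_finrank]

variable (k) in
/-- A circuit of the matroid of affine dependence: a minimal affinely dependent finite set. For
`d + 1` points of a `d`-dimensional space this is being critical coplanar. -/
def IsAffineCircuit (t : Finset P) : Prop :=
  ¬ AffineIndependent k ((↑) : t → P) ∧ ∀ s ⊂ t, AffineIndependent k ((↑) : s → P)

theorem IsAffineCircuit.notMem_of_insert [DecidableEq P] {t : Finset P} {y : P}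
    (h : IsAffineCircuit k (insert y t)) (ht : AffineIndependent k ((↑) : t → P)) : y ∉ t :=
  fun hy ↦ h.1 (by rwa [insert_eq_of_mem hy])

theorem isAffineCircuit_insert [DecidableEq P] {t : Finset P} {y : P}
    (ht : AffineIndependent k ((↑) : t → P)) (hyt : y ∉ t) (hy : y ∈ affineSpan k (t : Set P))
    (hy' : ∀ z ∈ t, y ∉ affineSpan k (t.erase z : Set P)) : IsAffineCircuit k (insert y t) := by
  refine ⟨fun h ↦ notMem_affineSpan_of_affineIndependent_insert hyt h hy, fun s hs ↦ ?_⟩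
  obtain ⟨z, hz, hzs⟩ := exists_of_ssubset hs
  have hsz : s ⊆ (insert y t).erase z := subset_erase.2 ⟨hs.subset, hzs⟩
  rcases eq_or_ne z y with rfl | hzy
  · exact affineIndependent_of_finset_subset (by rwa [erase_insert hyt] at hsz) ht
  · rw [erase_insert_of_ne hzy.symm] at hsz
    exact affineIndependent_of_finset_subset hsz <| affineIndependent_finset_insert
      (affineIndependent_of_finset_subset (erase_subset z t) ht)
      (hy' z (mem_of_mem_insert_of_ne hz hzy))

variable (k) in
open Classical in
/-- The `n`-element affinely independent subsets of `A`. -/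
noncomputable def affineIndepSubsets (A : Finset P) (n : ℕ) : Finset (Finset P) :=
  {s ∈ A.powersetCard n | AffineIndependent k ((↑) : s → P)}

variable (k) in
open Classical in
/-- The `n`-element affine circuits contained in `A`. -/
noncomputable def affineCircuits (A : Finset P) (n : ℕ) : Finset (Finset P) :=
  {t ∈ A.powersetCard n | IsAffineCircuit k t}

variable {A s t : Finset P} {n : ℕ}

theorem mem_affineIndepSubsets :
    s ∈ affineIndepSubsets k A n ↔ s ⊆ A ∧ #s = n ∧ AffineIndependent k ((↑) : s → P) := by
  simp only [affineIndepSubsets, mem_filter, mem_powersetCard, and_assoc]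

theorem mem_affineCircuits :
    t ∈ affineCircuits k A n ↔ t ⊆ A ∧ #t = n ∧ IsAffineCircuit k t := by
  simp only [affineCircuits, mem_filter, mem_powersetCard, and_assoc]

theorem sized_affineIndepSubsets : (affineIndepSubsets k A n : Set (Finset P)).Sized n :=
  fun _ hs ↦ (mem_affineIndepSubsets.1 hs).2.1

theorem sized_affineCircuits : (affineCircuits k A n : Set (Finset P)).Sized n :=
  fun _ ht ↦ (mem_affineCircuits.1 ht).2.1

open Classical in
theorem sum_card_isAffineCircuit_insert_insert_le {X : Finset P} (hsA : s ⊆ A) (hXA : X ⊆ A)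
    (hs : AffineIndependent k ((↑) : s → P)) (hX : ∀ x ∈ X, x ∉ affineSpan k (s : Set P)) :
    ∑ x ∈ X, #{y ∈ X | IsAffineCircuit k (insert y (insert x s))} ≤
      2 * #{t ∈ affineCircuits k A (#s + 2) | s ⊆ t} := by
  rw [← card_sigma]
  have notMem {x y : P} (hx : x ∈ X) (h : IsAffineCircuit k (insert y (insert x s))) :
      x ∉ s ∧ y ∉ insert x s :=
    ⟨fun hxs ↦ hX x hx (subset_affineSpan k _ hxs),
      h.notMem_of_insert (affineIndependent_finset_insert hs (hX x hx))⟩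
  refine card_le_mul_card_image_of_maps_to (f := fun p ↦ insert p.2 (insert p.1 s)) ?_ _
    fun t ht ↦ ?_
  · rintro ⟨x, y⟩ hp
    obtain ⟨hx, hy, h⟩ : x ∈ X ∧ y ∈ X ∧ IsAffineCircuit k (insert y (insert x s)) := by
      simpa using hp
    obtain ⟨hxs, hyxs⟩ := notMem hx h
    refine mem_filter.2 ⟨mem_affineCircuits.2 ⟨?_, ?_, h⟩, ?_⟩
    · exact insert_subset (hXA hy) (insert_subset (hXA hx) hsA)
    · rw [card_insert_of_notMem hyxs, card_insert_of_notMem hxs]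
    · exact (subset_insert x s).trans (subset_insert y _)
  · obtain ⟨htc, hst⟩ := mem_filter.1 ht
    have card_sdiff_eq : #(t \ s) = 2 := by
      rw [card_sdiff_of_subset hst, sized_affineCircuits htc, Nat.add_sub_cancel_left]
    suffices h : #{p ∈ X.sigma fun x ↦ {y ∈ X | IsAffineCircuit k (insert y (insert x s))} |
        insert p.2 (insert p.1 s) = t} ≤ #(t \ s).offDiag by
      rwa [offDiag_card, card_sdiff_eq] at h
    refine card_le_card_of_injOn (Equiv.sigmaEquivProd P P) ?_
      (Equiv.injective _).injOn
    rintro ⟨x, y⟩ hp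
    obtain ⟨⟨hx, -, h⟩, rfl⟩ : (x ∈ X ∧ y ∈ X ∧ IsAffineCircuit k (insert y (insert x s))) ∧
        insert y (insert x s) = t := by simpa using hp
    have := notMem hx h
    simp only [Equiv.sigmaEquivProd_apply, mem_coe, mem_offDiag, mem_sdiff, mem_insert] at this ⊢
    tauto

end Independence

open Classical in
theorem card_image_affineSpan_insert_le {W : AffineSubspace k P} (hW : (W : Set P).Nonempty)
    [Finite (ℙ k (V ⧸ W.direction))] {X : Finset P} (hX : ∀ x ∈ X, x ∉ W) :
    #(X.image fun x ↦ affineSpan k (insert x (W : Set P))) ≤ Nat.card (ℙ k (V ⧸ W.direction)) := by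
  obtain ⟨p, hp⟩ := hW
  let flat (v : ℙ k (V ⧸ W.direction)) : AffineSubspace k P :=
    mk' p (v.submodule.comap W.direction.mkQ)
  have eq_flat {x : P} (hx : x ∉ W) : affineSpan k (insert x (W : Set P)) ∈ Set.range flat := by
    have hv : W.direction.mkQ (x -ᵥ p) ≠ 0 := by
      simpa [vsub_right_mem_direction_iff_mem hp] using hx
    have hpx : p ∈ affineSpan k (insert x (W : Set P)) :=
      subset_affineSpan k _ (Set.mem_insert_of_mem x hp)
    refine ⟨.mk k _ hv, ?_⟩
    rw [← mk'_eq hpx, direction_affineSpan_insert hp, sup_comm, ← Submodule.comap_map_mkQ,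
      Submodule.map_span, Set.image_singleton, ← Projectivization.submodule_mk _ hv]
  calc #(X.image fun x ↦ affineSpan k (insert x (W : Set P)))
      ≤ (Set.range flat).ncard := by
        rw [← Set.ncard_coe_finset, coe_image]
        exact Set.ncard_le_ncard (Set.image_subset_iff.2 fun x hx ↦ eq_flat (hX x hx))
          (Set.finite_range flat)
    _ ≤ Nat.card (ℙ k (V ⧸ W.direction)) := by
        rw [← Set.image_univ, ← Set.ncard_univ]
        exact Set.ncard_image_le

section Finite

variable [Finite k] {A s t : Finset P} {n : ℕ}

open Classical in
theorem card_filter_mem_affineSpan_le (A s : Finset P) :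
    #{x ∈ A | x ∈ affineSpan k (s : Set P)} ≤ Nat.card k ^ (#s - 1) := by
  rcases s.eq_empty_or_nonempty with rfl | ⟨p, hp⟩
  · simp [notMem_bot]
  have : Nonempty (affineSpan k (s : Set P)) := ⟨p, subset_affineSpan k _ hp⟩
  have : FiniteDimensional k (affineSpan k (s : Set P)).direction :=
    finiteDimensional_direction_affineSpan_of_finite k s.finite_toSet
  have : Finite (affineSpan k (s : Set P)).direction := Module.finite_of_finite k
  let e := Equiv.vaddConst (⟨p, subset_affineSpan k _ hp⟩ : affineSpan k (s : Set P))
  have : Finite (affineSpan k (s : Set P)) := .of_equiv _ e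
  calc #{x ∈ A | x ∈ affineSpan k (s : Set P)}
      = ({x ∈ A | x ∈ affineSpan k (s : Set P)} : Set P).ncard := by
        rw [← Set.ncard_coe_finset, coe_filter]
    _ ≤ (affineSpan k (s : Set P) : Set P).ncard :=
        Set.ncard_le_ncard (fun x hx ↦ hx.2) (Set.toFinite _)
    _ = Nat.card k ^ finrank k (affineSpan k (s : Set P)).direction := by
        rw [← Module.natCard_eq_pow_finrank, Nat.card_congr e]
        exact (Nat.card_coe_set_eq _).symm
    _ ≤ Nat.card k ^ (#s - 1) := by
        refine Nat.pow_le_pow_right Nat.card_pos ?_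
        have h := finrank_vectorSpan_image_finset_le k id s
          (Nat.sub_add_cancel (card_pos.2 ⟨p, hp⟩)).symm
        rwa [image_id, ← direction_affineSpan] at h

open Classical in
theorem card_filter_mem_affineSpan_le_card_isAffineCircuit_add (A : Finset P)
    (htn : t.Nontrivial) (ht : AffineIndependent k ((↑) : t → P)) :
    #{y ∈ A | y ∈ affineSpan k (t : Set P)} ≤
      #{y ∈ A | IsAffineCircuit k (insert y t)} + #t * Nat.card k ^ (#t - 2) := by
  have cover : ({y ∈ A | y ∈ affineSpan k (t : Set P)} : Finset P) ⊆
      {y ∈ A | IsAffineCircuit k (insert y t)} ∪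
        t.biUnion fun z ↦ {y ∈ A | y ∈ affineSpan k (t.erase z : Set P)} := by
    intro y hy
    obtain ⟨hyA, hyt⟩ := mem_filter.1 hy
    simp only [mem_union, mem_biUnion, mem_filter, hyA, true_and]
    by_contra! ⟨hcirc, hflat⟩
    refine hcirc (isAffineCircuit_insert ht (fun hy ↦ ?_) hyt hflat)
    obtain ⟨z, hz, hzy⟩ := htn.exists_ne y
    exact hflat z hz (subset_affineSpan k _ (mem_erase.2 ⟨hzy.symm, hy⟩))
  refine (card_le_card cover).trans ((card_union_le _ _).trans (Nat.add_le_add_left ?_ _))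
  refine card_biUnion_le_card_mul _ _ _ fun z hz ↦ ?_
  have h := card_filter_mem_affineSpan_le (k := k) A (t.erase z)
  rwa [card_erase_of_mem hz, Nat.sub_sub] at h

open Classical in
theorem sq_card_le_mul_sum_card_mem_affineSpan_insert {W : AffineSubspace k P}
    (hW : (W : Set P).Nonempty) (hW₂ : finrank k (V ⧸ W.direction) = 2) {X : Finset P}
    (hX : ∀ x ∈ X, x ∉ W) :
    #X ^ 2 ≤ (Nat.card k + 1) * ∑ x ∈ X, #{y ∈ X | y ∈ affineSpan k (insert x (W : Set P))} := by
  have : Module.Finite k (V ⧸ W.direction) := Module.finite_of_finrank_pos (by lia)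
  have : Finite (V ⧸ W.direction) := Module.finite_of_finite k
  let flat (x : P) : AffineSubspace k P := affineSpan k (insert x (W : Set P))
  calc #X ^ 2 ≤ #(X.image flat) * ∑ x ∈ X, #{y ∈ X | flat y = flat x} :=
        sq_card_le_card_mul_sum_card_fiber fun _ ↦ mem_image_of_mem flat
    _ ≤ _ := by
        gcongr with x _ y
        · exact (card_image_affineSpan_insert_le hW hX).trans_eq
            (Projectivization.card_of_finrank_two k _ hW₂)
        · exact fun h ↦ h.le (subset_affineSpan k _ (Set.mem_insert y _))

open Classical in
theorem sq_card_le_mul_card_affineCircuits_superset_add {X : Finset P}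
    (hV : finrank k V = #s + 1) (hsn : s.Nonempty) (hs : AffineIndependent k ((↑) : s → P))
    (hsA : s ⊆ A) (hXA : X ⊆ A) (hX : ∀ x ∈ X, x ∉ affineSpan k (s : Set P)) :
    #X ^ 2 ≤ (Nat.card k + 1) * (2 * #{t ∈ affineCircuits k A (#s + 2) | s ⊆ t} +
      #X * ((#s + 1) * Nat.card k ^ (#s - 1))) := by
  have : FiniteDimensional k V := Module.finite_of_finrank_pos (by lia)
  have codim_eq_two : finrank k (V ⧸ (affineSpan k (s : Set P)).direction) = 2 := by
    have := finrank_quotient_direction_affineSpan_add_card hsn hs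
    lia
  have card_plane_le {x : P} (hx : x ∈ X) :
      #{y ∈ X | y ∈ affineSpan k (insert x (affineSpan k (s : Set P) : Set P))} ≤
        #{y ∈ X | IsAffineCircuit k (insert y (insert x s))} +
          (#s + 1) * Nat.card k ^ (#s - 1) := by
    have hxs : x ∉ s := fun h ↦ hX x hx (subset_affineSpan k _ h)
    have insert_nontrivial : (insert x s).Nontrivial := by
      rw [← one_lt_card_iff_nontrivial, card_insert_of_notMem hxs]
      exact Nat.lt_add_of_pos_left hsn.card_pos
    have h := card_filter_mem_affineSpan_le_card_isAffineCircuit_add X insert_nontrivial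
      (affineIndependent_finset_insert hs (hX x hx))
    rwa [coe_insert, ← affineSpan_insert_affineSpan, card_insert_of_notMem hxs] at h
  calc #X ^ 2
      ≤ (Nat.card k + 1) *
          ∑ x ∈ X, #{y ∈ X | y ∈ affineSpan k (insert x (affineSpan k (s : Set P) : Set P))} :=
        sq_card_le_mul_sum_card_mem_affineSpan_insert
          ((affineSpan_nonempty k).2 (coe_nonempty.2 hsn)) codim_eq_two hX
    _ ≤ (Nat.card k + 1) * ∑ x ∈ X, (#{y ∈ X | IsAffineCircuit k (insert y (insert x s))} +
          (#s + 1) * Nat.card k ^ (#s - 1)) := by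
        gcongr with x hx
        exact card_plane_le hx
    _ ≤ _ := by
        rw [sum_add_distrib, sum_const, smul_eq_mul]
        gcongr
        exact sum_card_isAffineCircuit_insert_insert_le hsA hXA hs hX

theorem sq_le_of_sq_le_mul_add {n a N q m C : ℕ} (hq : 2 ≤ q) (hm : 1 ≤ m) (han : n ≤ a + N)
    (hn : 4 * m * (N * q) ≤ n) (h : a ^ 2 ≤ (q + 1) * (2 * C + a * (m * N))) :
    n ^ 2 ≤ 32 * q * C := by
  have N_le : N ≤ m * (N * q) := by
    calc N = 1 * (N * 1) := by ring
      _ ≤ m * (N * q) := by gcongr; lia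
  have two_mul_exceptional_le : 2 * ((q + 1) * (m * N)) ≤ a := by
    have : 2 * (m * N) ≤ m * (N * q) := by nlinarith [Nat.zero_le (m * N)]
    nlinarith
  have half_absorbed : 2 * ((q + 1) * (a * (m * N))) ≤ a ^ 2 :=
    calc 2 * ((q + 1) * (a * (m * N))) = a * (2 * ((q + 1) * (m * N))) := by ring
      _ ≤ a ^ 2 := by rw [sq]; gcongr
  have sq_le : a ^ 2 ≤ 8 * q * C :=
    calc a ^ 2 ≤ 4 * (q + 1) * C := by linarith
      _ ≤ 4 * (2 * q) * C := by gcongr; lia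
      _ = 8 * q * C := by ring
  have n_le : n ≤ 2 * a := by lia
  calc n ^ 2 ≤ (2 * a) ^ 2 := by gcongr
    _ = 4 * a ^ 2 := by ring
    _ ≤ 4 * (8 * q * C) := by gcongr
    _ = 32 * q * C := by ring

open Classical in
theorem sq_card_le_mul_card_affineCircuits_superset
    (hV : finrank k V = #s + 1) (hsn : s.Nonempty) (hs : AffineIndependent k ((↑) : s → P))
    (hsA : s ⊆ A) (hA : 4 * (#s + 1) * Nat.card k ^ #s ≤ #A) :
    #A ^ 2 ≤ 32 * Nat.card k * #{t ∈ affineCircuits k A (#s + 2) | s ⊆ t} := by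
  have card_le : #A ≤ #{x ∈ A | x ∉ affineSpan k (s : Set P)} + Nat.card k ^ (#s - 1) := by
    have := card_filter_mem_affineSpan_le (k := k) A s
    have := card_filter_add_card_filter_not (s := A) (· ∈ affineSpan k (s : Set P))
    lia
  refine sq_le_of_sq_le_mul_add Finite.one_lt_card (Nat.succ_pos #s) card_le ?_
    (sq_card_le_mul_card_affineCircuits_superset_add hV hsn hs hsA (filter_subset _ A)
      fun x hx ↦ (mem_filter.1 hx).2)
  rwa [← pow_succ, Nat.sub_add_cancel hsn.card_pos]

theorem card_affineIndepSubsets_mul_le (A : Finset P) (n : ℕ) :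
    #(affineIndepSubsets k A n) * (#A - Nat.card k ^ (n - 1)) ≤
      #(affineIndepSubsets k A (n + 1)) * (n + 1) := by
  classical
  have card_extensions_ge {s : Finset P} (hs : s ∈ affineIndepSubsets k A n) :
      #A - Nat.card k ^ (n - 1) ≤ #{t ∈ affineIndepSubsets k A (n + 1) | s ⊆ t} := by
    obtain ⟨hsA, rfl, hind⟩ := mem_affineIndepSubsets.1 hs
    have card_off_span : #A - Nat.card k ^ (#s - 1) ≤
        #{x ∈ A | x ∉ affineSpan k (s : Set P)} := by
      have := card_filter_mem_affineSpan_le (k := k) A s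
      have := card_filter_add_card_filter_not (s := A) (· ∈ affineSpan k (s : Set P))
      lia
    have notMem {x : P} (hx : x ∉ affineSpan k (s : Set P)) : x ∉ s :=
      fun h ↦ hx (subset_affineSpan k _ h)
    refine card_off_span.trans (card_le_card_of_injOn (insert · s) (fun x hx ↦ ?_) ?_)
    · obtain ⟨hxA, hx⟩ := mem_filter.1 hx
      exact mem_filter.2 ⟨mem_affineIndepSubsets.2 ⟨insert_subset hxA hsA,
        card_insert_of_notMem (notMem hx), affineIndependent_finset_insert hind hx⟩,
        subset_insert x s⟩
    · exact fun x hx y _ h ↦ (insert_inj (notMem (mem_filter.1 hx).2)).1 h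
  calc #(affineIndepSubsets k A n) * (#A - Nat.card k ^ (n - 1))
      ≤ ∑ s ∈ affineIndepSubsets k A n, #{t ∈ affineIndepSubsets k A (n + 1) | s ⊆ t} := by
        rw [← smul_eq_mul]
        exact card_nsmul_le_sum _ _ _ fun s ↦ card_extensions_ge
    _ ≤ #(affineIndepSubsets k A (n + 1)) * (n + 1).choose n :=
        sum_card_filter_superset_le sized_affineIndepSubsets sized_affineIndepSubsets
    _ = #(affineIndepSubsets k A (n + 1)) * (n + 1) := by rw [Nat.choose_succ_self_right]

theorem pow_card_le_mul_card_affineIndepSubsets (hA : 2 * Nat.card k ^ (n - 2) ≤ #A) :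
    #A ^ n ≤ 2 ^ n * n ! * #(affineIndepSubsets k A n) := by
  induction n with
  | zero =>
    have : ∅ ∈ affineIndepSubsets k A 0 :=
      mem_affineIndepSubsets.2 ⟨empty_subset A, card_empty, affineIndependent_of_subsingleton k _⟩
    simpa using Finset.card_pos.2 ⟨∅, this⟩
  | succ n ih =>
    have pow_le : Nat.card k ^ (n - 2) ≤ Nat.card k ^ (n + 1 - 2) :=
      Nat.pow_le_pow_right Nat.card_pos (by lia)
    have ih := ih (by lia)
    have half_le : #A ≤ 2 * (#A - Nat.card k ^ (n - 1)) := by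
      rw [Nat.add_sub_add_right] at hA
      lia
    calc #A ^ (n + 1) = #A ^ n * #A := pow_succ _ _
      _ ≤ (2 ^ n * n ! * #(affineIndepSubsets k A n)) *
          (2 * (#A - Nat.card k ^ (n - 1))) := by gcongr
      _ = 2 ^ (n + 1) * n ! *
          (#(affineIndepSubsets k A n) * (#A - Nat.card k ^ (n - 1))) := by ring
      _ ≤ 2 ^ (n + 1) * n ! * (#(affineIndepSubsets k A (n + 1)) * (n + 1)) :=
          Nat.mul_le_mul_left _ (card_affineIndepSubsets_mul_le A n)
      _ = 2 ^ (n + 1) * (n + 1)! * #(affineIndepSubsets k A (n + 1)) := by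
          rw [Nat.factorial_succ]
          ring

theorem pow_card_le_mul_card_affineCircuits {d : ℕ} (hd : 2 ≤ d) (hV : finrank k V = d)
    (hA : 4 * d * Nat.card k ^ (d - 1) ≤ #A) :
    #A ^ (d + 1) ≤ 2 ^ (d + 3) * (d + 1)! * Nat.card k * #(affineCircuits k A (d + 1)) := by
  classical
  obtain ⟨m, rfl⟩ : ∃ m, d = m + 2 := ⟨d - 2, by lia⟩
  have sq_card_le {s : Finset P} (hs : s ∈ affineIndepSubsets k A (m + 1)) :
      #A ^ 2 ≤ 32 * Nat.card k * #{t ∈ affineCircuits k A (m + 3) | s ⊆ t} := by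
    obtain ⟨hsA, hsc, hs⟩ := mem_affineIndepSubsets.1 hs
    have h := sq_card_le_mul_card_affineCircuits_superset (A := A) (hsc ▸ hV)
      (card_pos.1 (by lia)) hs hsA (by rwa [hsc])
    rwa [hsc] at h
  have pow_card_le : #A ^ (m + 1) ≤ 2 ^ (m + 1) * (m + 1)! * #(affineIndepSubsets k A (m + 1)) := by
    refine pow_card_le_mul_card_affineIndepSubsets (le_trans ?_ hA)
    exact Nat.mul_le_mul (by lia) (Nat.pow_le_pow_right Nat.card_pos (by lia))
  have choose_mul : (m + 3).choose (m + 1) * (m + 1)! * 2 = (m + 3)! := by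
    have h := Nat.choose_mul_factorial_mul_factorial (show m + 1 ≤ m + 3 by lia)
    rwa [show m + 3 - (m + 1) = 2 by lia, Nat.factorial_two] at h
  calc #A ^ (m + 3) = #A ^ (m + 1) * #A ^ 2 := pow_add _ (m + 1) 2
    _ ≤ 2 ^ (m + 1) * (m + 1)! * #(affineIndepSubsets k A (m + 1)) * #A ^ 2 := by gcongr
    _ = 2 ^ (m + 1) * (m + 1)! * ∑ s ∈ affineIndepSubsets k A (m + 1), #A ^ 2 := by
        rw [sum_const, smul_eq_mul, mul_assoc]
    _ ≤ 2 ^ (m + 1) * (m + 1)! * ∑ s ∈ affineIndepSubsets k A (m + 1),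
          32 * Nat.card k * #{t ∈ affineCircuits k A (m + 3) | s ⊆ t} := by
        gcongr with s hs
        exact sq_card_le hs
    _ ≤ 2 ^ (m + 1) * (m + 1)! *
          (32 * Nat.card k * (#(affineCircuits k A (m + 3)) * (m + 3).choose (m + 1))) := by
        rw [← mul_sum]
        gcongr
        exact sum_card_filter_superset_le sized_affineIndepSubsets sized_affineCircuits
    _ = 2 ^ (m + 5) * ((m + 3).choose (m + 1) * (m + 1)! * 2) * Nat.card k *
          #(affineCircuits k A (m + 3)) := by ring
    _ = 2 ^ (m + 5) * (m + 3)! * Nat.card k * #(affineCircuits k A (m + 3)) := by rw [choose_mul]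

theorem supersaturation_critical_coplanar_general {d : ℕ} (hd : 2 ≤ d) (hV : finrank k V = d)
    (A : Finset P) (hA : 4 * d * Nat.card k ^ (d - 1) ≤ #A) :
    1 / (2 ^ (d + 3) * (d + 1)!) * (#A : ℝ) ^ (d + 1) / Nat.card k ≤
      {t : Finset P | t ⊆ A ∧ #t = d + 1 ∧ IsAffineCircuit k t}.ncard := by
  have coe_affineCircuits : {t : Finset P | t ⊆ A ∧ #t = d + 1 ∧ IsAffineCircuit k t} =
      affineCircuits k A (d + 1) := by
    ext t
    exact mem_affineCircuits.symm
  have card_pos : (0 : ℝ) < Nat.card k := mod_cast Nat.card_pos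
  rw [coe_affineCircuits, Set.ncard_coe_finset, div_le_iff₀ card_pos, one_div_mul_eq_div,
    div_le_iff₀ (by positivity)]
  calc (#A : ℝ) ^ (d + 1)
      ≤ 2 ^ (d + 3) * (d + 1)! * Nat.card k * #(affineCircuits k A (d + 1)) :=
        mod_cast pow_card_le_mul_card_affineCircuits hd hV hA
    _ = #(affineCircuits k A (d + 1)) * Nat.card k * (2 ^ (d + 3) * (d + 1)!) := by ring

end Finite

end

/-- Supersaturation for critical coplanar `(d+1)`-tuples: if
`|P| ≥ 4d·q^{d−1}` then `P` contains at least `c·|P|^{d+1}/q` critical coplanar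
`(d+1)`-element subsets. -/
theorem supersaturation_critical_coplanar (d : ℕ) (hd : 2 ≤ d) :
    ∃ c : ℝ, 0 < c ∧ ∀ q : ℕ, IsPrimePow q →
      ∀ (F : Type) [Field F] [Fintype F], Fintype.card F = q →
        ∀ P : Finset (Fin d → F), 4 * d * q ^ (d - 1) ≤ P.card →
          c * (P.card : ℝ) ^ (d + 1) / (q : ℝ)
            ≤ (({t : Finset (Fin d → F) | t ⊆ P ∧
                  IsCriticalCoplanar F d t}).ncard : ℝ) := by
  refine ⟨1 / (2 ^ (d + 3) * (d + 1).factorial), by positivity, fun q _ F _ _ hF P hP ↦ ?_⟩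
  rw [← hF, ← Nat.card_eq_fintype_card] at hP ⊢
  exact supersaturation_critical_coplanar_general hd (Module.finrank_fin_fun F) P hP
end
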